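/- arXiv:2404.00259 — 2 statements merged into one kernel-verified Lean document; each statement's English description precedes it below -/
import Mathlib

section
/- Let M be a von Neumann algebra with a faithful normal semifinite trace τ. If f ∈ M is a nonzero finite projection, then there exists a central projection z ∈ M such that zf ≠ 0 and τ(zf) < ∞. -/
open ContinuousLinearMap Filter Topology

noncomputable section

namespace VNA

variable {H : Type*} [NormedAddCommGroup H] [InnerProductSpace ℂ H] [CompleteSpace H]

/-- A projection (orthogonal projection): idempotent and self-adjoint. -/
def IsProjection (p : H →L[ℂ] H) : Prop := p * p = p ∧ star p = p

/-- Murray–von Neumann equivalence of `p` and `q` relative to `M`. -/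
def MvNE (M : VonNeumannAlgebra H) (p q : H →L[ℂ] H) : Prop :=
  ∃ v ∈ M, star v * v = p ∧ v * star v = q

/-- `p` is a finite projection of `M`; for projections, `q ≤ p` is the range
containment `p * q = q`. -/
def IsFiniteProjection (M : VonNeumannAlgebra H) (p : H →L[ℂ] H) : Prop :=
  p ∈ M ∧ IsProjection p ∧
    ∀ q, q ∈ M → IsProjection q → p * q = q → MvNE M q p → q = p

def IsInfiniteProjection (M : VonNeumannAlgebra H) (p : H →L[ℂ] H) : Prop :=
  p ∈ M ∧ IsProjection p ∧ ¬ IsFiniteProjection M p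

/-- The centre `Z(M) = M ∩ M'` as a set. -/
def centerSet (M : VonNeumannAlgebra H) : Set (H →L[ℂ] H) :=
  {z | z ∈ M ∧ ∀ y ∈ M, z * y = y * z}

def IsCentralProjection (M : VonNeumannAlgebra H) (z : H →L[ℂ] H) : Prop :=
  IsProjection z ∧ z ∈ centerSet M

def IsProperlyInfiniteProjection (M : VonNeumannAlgebra H) (p : H →L[ℂ] H) : Prop :=
  p ∈ M ∧ IsProjection p ∧
    ∀ z, IsCentralProjection M z → z * p ≠ 0 → IsInfiniteProjection M (z * p)

def ProperlyInfinite (M : VonNeumannAlgebra H) : Prop :=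
  IsProperlyInfiniteProjection M 1

/-- `M` is σ-finite: every family of pairwise orthogonal nonzero projections in `M`
is countable. -/
def SigmaFinite (M : VonNeumannAlgebra H) : Prop :=
  ∀ S : Set (H →L[ℂ] H), (∀ p ∈ S, p ∈ M ∧ IsProjection p ∧ p ≠ 0) →
    (∀ p ∈ S, ∀ q ∈ S, p ≠ q → p * q = 0) → S.Countable

/-- A faithful normal semifinite trace on `M`. -/
structure IsFNSTrace (M : VonNeumannAlgebra H) (τ : (H →L[ℂ] H) → ENNReal) : Prop where
  map_zero : τ 0 = 0
  additive : ∀ x y : H →L[ℂ] H, x ∈ M → y ∈ M → 0 ≤ x → 0 ≤ y → τ (x + y) = τ x + τ y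
  homogeneous : ∀ (c : ℝ) (x : H →L[ℂ] H), 0 ≤ c → x ∈ M → 0 ≤ x →
    τ (c • x) = ENNReal.ofReal c * τ x
  tracial : ∀ x : H →L[ℂ] H, x ∈ M → τ (star x * x) = τ (x * star x)
  faithful : ∀ x : H →L[ℂ] H, x ∈ M → 0 ≤ x → τ x = 0 → x = 0
  normal : ∀ (ι : Type*) [Preorder ι] [IsDirected ι (· ≤ ·)] [Nonempty ι]
      (f : ι → (H →L[ℂ] H)) (x : H →L[ℂ] H),
      (∀ i, f i ∈ M) → (∀ i, 0 ≤ f i) → Monotone f → (∃ C : ℝ, ∀ i, ‖f i‖ ≤ C) →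
      x ∈ M → IsLUB (Set.range f) x → τ x = ⨆ i, τ (f i)
  semifinite : ∀ x : H →L[ℂ] H, x ∈ M → 0 ≤ x → x ≠ 0 →
      ∃ y, y ∈ M ∧ 0 ≤ y ∧ y ≤ x ∧ y ≠ 0 ∧ τ y < ⊤

/-- `p` is a `τ`-finite projection of `M`. -/
def IsTauFiniteProjection (M : VonNeumannAlgebra H) (τ : (H →L[ℂ] H) → ENNReal)
    (p : H →L[ℂ] H) : Prop :=
  p ∈ M ∧ IsProjection p ∧ τ p < ⊤

/-- `F₁⁺(M) = {x ∈ M : 0 ≤ x ≤ 1, px = x for some τ-finite projection p}`. -/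
def F1plus (M : VonNeumannAlgebra H) (τ : (H →L[ℂ] H) → ENNReal) : Set (H →L[ℂ] H) :=
  {x | x ∈ M ∧ 0 ≤ x ∧ x ≤ 1 ∧ ∃ p, IsTauFiniteProjection M τ p ∧ p * x = x}

/-- `K(M,τ)`: operator-norm closure of the τ-finitely supported elements of `M`. -/
def Kideal (M : VonNeumannAlgebra H) (τ : (H →L[ℂ] H) → ENNReal) : Set (H →L[ℂ] H) :=
  closure {x | x ∈ M ∧ ∃ p, IsTauFiniteProjection M τ p ∧ p * x = x}

/-- A commuting self-adjoint `n`-tuple in `M`. -/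
def IsCommutingSelfAdjointTuple (M : VonNeumannAlgebra H) {n : ℕ}
    (α : Fin n → (H →L[ℂ] H)) : Prop :=
  (∀ j, α j ∈ M) ∧ (∀ j, star (α j) = α j) ∧ ∀ i j, α i * α j = α j * α i

/-- `‖[r,α]‖ = max_{1≤j≤n} ‖[r, α(j)]‖`. -/
def commNorm {n : ℕ} (α : Fin n → (H →L[ℂ] H)) (r : H →L[ℂ] H) : ℝ :=
  ⨆ j, ‖r * α j - α j * r‖

/-- `WZ*(S)`: the double commutant in `B(H)` of `S ∪ Z(M)`. -/
def WZstar (M : VonNeumannAlgebra H) (S : Set (H →L[ℂ] H)) : Set (H →L[ℂ] H) :=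
  Set.centralizer (Set.centralizer (S ∪ centerSet M))

/-- A diagonal operator of `M`: `d = Σ_k λ_k p_k` with pairwise orthogonal
projections `p_k ∈ M`, the series converging in the strong operator topology. -/
def IsDiagonal (M : VonNeumannAlgebra H) (d : H →L[ℂ] H) : Prop :=
  ∃ (p : ℕ → H →L[ℂ] H) (lam : ℕ → ℂ),
    (∀ k, p k ∈ M) ∧ (∀ k, IsProjection (p k)) ∧
    (∀ k l, k ≠ l → p k * p l = 0) ∧
    ∀ ξ : H, HasSum (fun k => lam k • (p k ξ)) (d ξ)

end VNA

/-!
By semifiniteness `f` dominates a nonzero projection `e` of finite trace. Pack into `f` a maximal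
family of copies of `e` with mutually orthogonal ranges; an infinite family would contain a
sequence of copies, and shifting it would make `f` equivalent to a proper subprojection, so the
family is finite. By the comparison theorem some central projection `z` makes what is left of `f`
equivalent to a subprojection of `e`, and `z * e ≠ 0` because, by maximality, no further copy of
`e` fits. Hence `z * f` is a finite sum of projections each equivalent to a subprojection of `e`.
-/

namespace VNA

theorem exists_maximal_pairwise {α : Type*} (P : Set α) (r : α → α → Prop) [Std.Symm r] :
    ∃ S ⊆ P, S.Pairwise r ∧ ∀ a ∈ P, (∀ b ∈ S, r a b) → a ∈ S := by
  obtain ⟨S, ⟨hSP, hSr⟩, hmax⟩ := zorn_subset {S : Set α | S ⊆ P ∧ S.Pairwise r}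
    fun c hc hchain => ⟨⋃₀ c, ⟨Set.sUnion_subset fun s hs => (hc hs).1,
      hchain.pairwise_sUnion.2 fun s hs => (hc hs).2⟩, fun s hs => Set.subset_sUnion_of_mem hs⟩
  refine ⟨S, hSP, hSr, fun a ha har => hmax (y := insert a S) ⟨?_, ?_⟩
    (Set.subset_insert a S) (Set.mem_insert a S)⟩
  · exact Set.insert_subset ha hSP
  · exact Set.pairwise_insert_of_symm.2 ⟨hSr, fun b hb _ => har b hb⟩

section PartialIsometry

variable {A : Type*}

/-- A partial isometry, in the algebraic form which makes sense in any `*`-semigroup. -/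
def IsPartialIsometry [Mul A] [Star A] (v : A) : Prop := v * star v * v = v

/-- Orthogonality of `v` and `w` as elements of a `*`-algebra. For partial isometries it says that
both their initial spaces and their final spaces are orthogonal. -/
def StarOrthogonal [Mul A] [Star A] [Zero A] (v w : A) : Prop :=
  star v * w = 0 ∧ v * star w = 0

section Semigroup

variable [Semigroup A] [StarMul A] {v : A}

theorem IsPartialIsometry.star (hv : IsPartialIsometry v) : IsPartialIsometry (star v) := by
  simpa only [IsPartialIsometry, star_mul, star_star, mul_assoc] using congrArg Star.star hv

theorem IsPartialIsometry.isStarProjection_star_mul_self (hv : IsPartialIsometry v) :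
    IsStarProjection (Star.star v * v) where
  isIdempotentElem := by rw [IsIdempotentElem, mul_assoc, ← mul_assoc v, hv]
  isSelfAdjoint := .star_mul_self v

theorem IsPartialIsometry.isStarProjection_mul_star_self (hv : IsPartialIsometry v) :
    IsStarProjection (v * Star.star v) := by
  simpa only [star_star] using hv.star.isStarProjection_star_mul_self

end Semigroup

section Ring

variable [NonUnitalRing A] [StarRing A] {v w e p : A}

theorem star_mul_eq_zero_symm (h : star v * w = 0) : star w * v = 0 := by
  simpa only [star_mul, star_star, star_zero] using congrArg star h

theorem StarOrthogonal.symm (h : StarOrthogonal v w) : StarOrthogonal w v :=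
  ⟨star_mul_eq_zero_symm h.1, by
    simpa only [star_mul, star_star, star_zero] using congrArg star h.2⟩

theorem StarOrthogonal.sum_right {ι : Type*} {s : Finset ι} {w : ι → A}
    (h : ∀ i ∈ s, StarOrthogonal v (w i)) : StarOrthogonal v (∑ i ∈ s, w i) := by
  constructor
  · rw [Finset.mul_sum]
    exact Finset.sum_eq_zero fun i hi => (h i hi).1
  · rw [star_sum, Finset.mul_sum]
    exact Finset.sum_eq_zero fun i hi => (h i hi).2

theorem IsPartialIsometry.add (hv : IsPartialIsometry v) (hw : IsPartialIsometry w)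
    (h : StarOrthogonal v w) : IsPartialIsometry (v + w) := by
  have hvw : (v + w) * Star.star (v + w) = v * Star.star v + w * Star.star w := by
    rw [star_add, add_mul, mul_add, mul_add, h.2, h.symm.2, add_zero, zero_add]
  rw [IsPartialIsometry, hvw, add_mul, mul_add, mul_add, hv, hw, mul_assoc v, h.1,
    mul_assoc w, h.symm.1, mul_zero, mul_zero, add_zero, zero_add]

theorem IsPartialIsometry.sum {ι : Type*} {s : Finset ι} {v : ι → A}
    (hv : ∀ i ∈ s, IsPartialIsometry (v i))
    (ho : (s : Set ι).Pairwise fun i j => StarOrthogonal (v i) (v j)) :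
    IsPartialIsometry (∑ i ∈ s, v i) := by
  classical
  induction s using Finset.induction_on with
  | empty => simp [IsPartialIsometry]
  | insert i s hi ih =>
    rw [Finset.sum_insert hi]
    rw [Finset.coe_insert] at ho
    refine (hv i (Finset.mem_insert_self i s)).add
      (ih (fun j hj => hv j (Finset.mem_insert_of_mem hj)) (ho.mono (Set.subset_insert _ _)))
      (StarOrthogonal.sum_right fun j hj => ?_)
    exact ho (Set.mem_insert _ _) (Set.mem_insert_of_mem _ hj) (ne_of_mem_of_not_mem hj hi).symm

theorem star_add_mul_add_of_mul_eq_zero (he : IsStarProjection e) (h : e * v = 0) :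
    star (v + e) * (v + e) = star v * v + e := by
  have h' : star v * e = 0 := star_mul_eq_zero_symm (by rwa [he.isSelfAdjoint.star_eq])
  rw [star_add, he.isSelfAdjoint.star_eq, add_mul, mul_add, mul_add, h, h',
    he.isIdempotentElem.eq, add_zero, zero_add]

theorem IsPartialIsometry.isStarProjection_sub_mul_star_self (hv : IsPartialIsometry v)
    (he : IsStarProjection e) (hev : e * v = v) : IsStarProjection (e - v * Star.star v) :=
  hv.isStarProjection_mul_star_self.sub_of_mul_eq_right he (by rw [← mul_assoc, hev])

theorem IsPartialIsometry.isStarProjection_sub_star_mul_self (hv : IsPartialIsometry v)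
    (he : IsStarProjection e) (hve : v * e = v) : IsStarProjection (e - Star.star v * v) :=
  hv.isStarProjection_star_mul_self.sub_of_mul_eq_left he (by rw [mul_assoc, hve])

theorem IsPartialIsometry.sub_mul_star_self_mul (hv : IsPartialIsometry v) (hev : e * v = v) :
    (e - v * Star.star v) * v = 0 := by
  rw [sub_mul, hev, hv, sub_self]

theorem IsPartialIsometry.mul_sub_star_mul_self (hv : IsPartialIsometry v) (hve : v * e = v) :
    v * (e - Star.star v * v) = 0 := by
  rw [mul_sub, hve, ← mul_assoc, hv, sub_self]

theorem IsPartialIsometry.starOrthogonal_of_sub_mul (hv : IsPartialIsometry v)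
    (he : IsSelfAdjoint e) (hp : IsSelfAdjoint p) (hve : v * e = v) (hpv : p * v = v)
    (hwe : w * (e - Star.star v * v) = w) (hpw : (p - v * Star.star v) * w = w) :
    StarOrthogonal v w := by
  have hr : IsSelfAdjoint (p - v * Star.star v) := hp.sub (.mul_star_self v)
  have hs : IsSelfAdjoint (e - Star.star v * v) := he.sub (.star_mul_self v)
  constructor
  · refine star_mul_eq_zero_symm ?_
    rw [← hpw, star_mul, hr.star_eq, mul_assoc, hv.sub_mul_star_self_mul hpv, mul_zero]
  · rw [← hwe, star_mul, hs.star_eq, ← mul_assoc, hv.mul_sub_star_mul_self hve, zero_mul]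

theorem sum_mul_star_self_mul {s : Finset A} (hs : ∀ v ∈ s, IsPartialIsometry v)
    (ho : (s : Set A).Pairwise fun v w => star v * w = 0) (hv : v ∈ s) :
    (∑ w ∈ s, w * star w) * v = v := by
  rw [Finset.sum_mul, Finset.sum_eq_single_of_mem v hv, hs v hv]
  intro w hw hwv
  rw [mul_assoc, ho hw hv hwv, mul_zero]

theorem isStarProjection_sum_mul_star_self {s : Finset A} (hs : ∀ v ∈ s, IsPartialIsometry v)
    (ho : (s : Set A).Pairwise fun v w => star v * w = 0) :
    IsStarProjection (∑ v ∈ s, v * star v) where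
  isIdempotentElem := by
    rw [IsIdempotentElem, Finset.mul_sum]
    refine Finset.sum_congr rfl fun v hv => ?_
    rw [← mul_assoc, sum_mul_star_self_mul hs ho hv]
  isSelfAdjoint := isSelfAdjoint_sum s fun v _ => .mul_star_self v

end Ring

section CStarRing

variable [NonUnitalNormedRing A] [StarRing A] [CStarRing A] {v : A}

theorem IsPartialIsometry.norm_le_one (hv : IsPartialIsometry v) : ‖v‖ ≤ 1 := by
  have h := hv.isStarProjection_star_mul_self.norm_le
  rw [CStarRing.norm_star_mul_self] at h
  exact abs_le_one_iff_mul_self_le_one.2 h |> (le_abs_self _).trans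

theorem isPartialIsometry_of_isStarProjection (h : IsStarProjection (star v * v)) :
    IsPartialIsometry v := by
  have hidem : star v * v * (star v * v) = star v * v := h.isIdempotentElem
  refine sub_eq_zero.1 (CStarRing.star_mul_self_eq_zero_iff _ |>.1 ?_)
  calc star (v * star v * v - v) * (v * star v * v - v)
      = star v * v * (star v * v) * (star v * v) - star v * v * (star v * v)
          - star v * v * (star v * v) + star v * v := by
        simp only [star_sub, star_mul, star_star]; noncomm_ring
    _ = 0 := by rw [hidem, hidem]; abel

end CStarRing

theorem le_of_smul_le_of_mul_eq [CStarAlgebra A] [PartialOrder A] [StarOrderedRing A] {a e p : A}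
    (he : IsStarProjection e) (hp : IsStarProjection p) {c : ℝ} (hc : 0 < c) (h : c • e ≤ a)
    (hap : a * p = a) : e ≤ p := by
  have hconj : c • (star (1 - p) * e * (1 - p)) ≤ 0 := by
    calc c • (star (1 - p) * e * (1 - p)) = star (1 - p) * (c • e) * (1 - p) := by
          rw [mul_smul_comm, smul_mul_assoc]
      _ ≤ star (1 - p) * a * (1 - p) := star_left_conjugate_le_conjugate h _
      _ = 0 := by rw [mul_assoc, mul_sub, mul_one, hap, sub_self, mul_zero]
  have hstar : star (e * (1 - p)) * (e * (1 - p)) = star (1 - p) * e * (1 - p) := by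
    rw [star_mul, he.isSelfAdjoint.star_eq, mul_assoc, ← mul_assoc e, he.isIdempotentElem.eq,
      mul_assoc]
  have hzero : e * (1 - p) = 0 := by
    refine CStarRing.star_mul_self_eq_zero_iff _ |>.1 (le_antisymm ?_ (star_mul_self_nonneg _))
    exact hstar ▸ (smul_nonpos_iff_nonpos_of_pos_left hc).1 hconj
  refine (he.le_iff_mul_eq_left hp).2 ?_
  rwa [mul_sub, mul_one, sub_eq_zero, eq_comm] at hzero

end PartialIsometry

section StrongSum

variable {𝕜 E ι : Type*} [RCLike 𝕜] [NormedAddCommGroup E] [InnerProductSpace 𝕜 E]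
  {v : ι → E →L[𝕜] E} {S T : E →L[𝕜] E}

/-- `T` is the sum of the operators `v i` in the strong operator topology. -/
def HasStrongSum (v : ι → E →L[𝕜] E) (T : E →L[𝕜] E) : Prop :=
  ∀ x, HasSum (fun i => v i x) (T x)

namespace HasStrongSum

theorem unique (hS : HasStrongSum v S) (hT : HasStrongSum v T) : S = T :=
  ContinuousLinearMap.ext fun x => (hS x).unique (hT x)

theorem mul_left (hT : HasStrongSum v T) (a : E →L[𝕜] E) :
    HasStrongSum (fun i => a * v i) (a * T) :=
  fun x => (hT x).mapL a

theorem mul_right (hT : HasStrongSum v T) (a : E →L[𝕜] E) :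
    HasStrongSum (fun i => v i * a) (T * a) :=
  fun x => hT (a x)

theorem eq_single (hT : HasStrongSum v T) (i : ι) (h : ∀ j ≠ i, v j = 0) : T = v i :=
  hT.unique fun x => hasSum_single i fun j hj => by rw [h j hj, zero_apply]

theorem mul_left_eq_self (hT : HasStrongSum v T) {a : E →L[𝕜] E} (h : ∀ i, a * v i = v i) :
    a * T = T :=
  (hT.mul_left a).unique (by simpa only [h] using hT)

theorem mul_right_eq_self (hT : HasStrongSum v T) {a : E →L[𝕜] E} (h : ∀ i, v i * a = v i) :
    T * a = T :=
  (hT.mul_right a).unique (by simpa only [h] using hT)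

end HasStrongSum

variable [CompleteSpace E]

theorem exists_hasStrongSum (hv : ∀ i, IsPartialIsometry (v i))
    (ho : Pairwise fun i j => StarOrthogonal (v i) (v j)) : ∃ T, HasStrongSum v T := by
  have hnorm (s : Finset ι) : ‖∑ i ∈ s, v i‖ ≤ 1 :=
    (IsPartialIsometry.sum (fun i _ => hv i) (ho.set_pairwise _)).norm_le_one
  have hbessel (s : Finset ι) (x : E) : ‖∑ i ∈ s, v i x‖ ≤ ‖x‖ := by
    simpa using (∑ i ∈ s, v i).le_of_opNorm_le (hnorm s) x
  have horth : OrthogonalFamily 𝕜 (fun i => (v i).range) fun i => (v i).range.subtypeₗᵢ := by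
    rintro i j hij ⟨_, x, rfl⟩ ⟨_, y, rfl⟩
    have hij' := congrArg (fun a : E →L[𝕜] E => inner 𝕜 x (a y)) (ho hij).1
    simpa [star_eq_adjoint, adjoint_inner_right] using hij'
  have hsummable (x : E) : Summable fun i => v i x := by
    refine (horth.summable_iff_norm_sq_summable fun i => ⟨v i x, x, rfl⟩).2 ?_
    refine summable_of_sum_le (c := ‖x‖ ^ 2) (fun i => by positivity) fun s => ?_
    rw [← horth.norm_sum]
    exact pow_le_pow_left₀ (norm_nonneg _) (hbessel s x) 2
  refine ⟨ofTendstoOfBoundedRange (l := atTop) (fun x => ∑' i, v i x) (fun s => ∑ i ∈ s, v i)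
    (tendsto_pi_nhds.2 fun x => ?_) ?_, fun x => (hsummable x).hasSum⟩
  · simpa [HasSum] using (hsummable x).hasSum
  · exact (Metric.isBounded_closedBall (x := 0) (r := 1)).subset
      (Set.range_subset_iff.2 fun s => by simpa using hnorm s)

namespace HasStrongSum

theorem mul_star_eq (hT : HasStrongSum v T)
    (ho : Pairwise fun i j => StarOrthogonal (v i) (v j)) (i : ι) :
    T * star (v i) = v i * star (v i) :=
  (hT.mul_right (star (v i))).eq_single i fun _ hj => (ho hj).2

theorem star_mul_eq (hT : HasStrongSum v T)
    (ho : Pairwise fun i j => StarOrthogonal (v i) (v j)) (i : ι) :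
    star T * v i = star (v i) * v i := by
  have h : star (v i) * T = star (v i) * v i :=
    (hT.mul_left (star (v i))).eq_single i fun _ hj => (ho hj.symm).1
  simpa only [star_mul, star_star] using congrArg star h

theorem mul_star_self_mul (hT : HasStrongSum v T) (hv : ∀ i, IsPartialIsometry (v i))
    (ho : Pairwise fun i j => StarOrthogonal (v i) (v j)) (i : ι) : T * star T * v i = v i := by
  rw [mul_assoc, hT.star_mul_eq ho, ← mul_assoc, hT.mul_star_eq ho, hv i]

theorem mul_star_mul_self (hT : HasStrongSum v T) (hv : ∀ i, IsPartialIsometry (v i))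
    (ho : Pairwise fun i j => StarOrthogonal (v i) (v j)) (i : ι) : v i * (star T * T) = v i := by
  have h : star T * T * star (v i) = star (v i) := by
    rw [mul_assoc, hT.mul_star_eq ho, ← mul_assoc, hT.star_mul_eq ho]
    simpa only [IsPartialIsometry, star_star] using (hv i).star
  simpa only [star_mul, star_star] using congrArg star h

theorem isPartialIsometry (hT : HasStrongSum v T) (hv : ∀ i, IsPartialIsometry (v i))
    (ho : Pairwise fun i j => StarOrthogonal (v i) (v j)) : IsPartialIsometry T :=
  hT.mul_left_eq_self (hT.mul_star_self_mul hv ho)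

theorem starOrthogonal (hT : HasStrongSum v T) (hv : ∀ i, IsPartialIsometry (v i))
    (ho : Pairwise fun i j => StarOrthogonal (v i) (v j)) {w : E →L[𝕜] E}
    (hTw : StarOrthogonal T w) (i : ι) : StarOrthogonal (v i) w := by
  constructor
  · rw [← hT.mul_star_self_mul hv ho i, star_mul, star_mul, star_star, mul_assoc, mul_assoc, hTw.1,
      mul_zero, mul_zero]
  · rw [← hT.mul_star_mul_self hv ho i, mul_assoc, mul_assoc, hTw.2, mul_zero, mul_zero]

end HasStrongSum

end StrongSum

section ClosureProjection

variable {𝕜 E : Type*} [RCLike 𝕜] [NormedAddCommGroup E] [InnerProductSpace 𝕜 E] [CompleteSpace E]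

/-- The orthogonal projection onto the closure of `K`. The range projection of an operator `a` is
`closureProjection a.range`. -/
def closureProjection (K : Submodule 𝕜 E) : E →L[𝕜] E := K.topologicalClosure.starProjection

theorem isStarProjection_closureProjection (K : Submodule 𝕜 E) :
    IsStarProjection (closureProjection K) :=
  isStarProjection_starProjection

theorem closureProjection_mul_of_range_le {K : Submodule 𝕜 E} {a : E →L[𝕜] E}
    (h : a.range ≤ K) : closureProjection K * a = a :=
  ContinuousLinearMap.ext fun x =>
    Submodule.starProjection_eq_self_iff.2 (K.le_topologicalClosure (h ⟨x, rfl⟩))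

theorem mul_closureProjection_eq_zero {K : Submodule 𝕜 E} {a : E →L[𝕜] E} (h : K ≤ a.ker) :
    a * closureProjection K = 0 :=
  ContinuousLinearMap.ext fun x => K.topologicalClosure_minimal h a.isClosed_ker
    (Submodule.starProjection_apply_mem K.topologicalClosure x)

end ClosureProjection

variable {H : Type*} [NormedAddCommGroup H] [InnerProductSpace ℂ H] [CompleteSpace H]
  {M : VonNeumannAlgebra H} {a e f p x z : H →L[ℂ] H}

section Membership

theorem mem_of_forall_commutant_commute (h : ∀ y ∈ M.commutant, y * a = a * y) : a ∈ M := by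
  rwa [← M.commutant_commutant, VonNeumannAlgebra.mem_commutant_iff]

theorem commutant_mul_comm {y : H →L[ℂ] H} (hy : y ∈ M.commutant) (ha : a ∈ M) : y * a = a * y :=
  (VonNeumannAlgebra.mem_commutant_iff.1 hy a ha).symm

theorem real_smul_mem (c : ℝ) (ha : a ∈ M) : c • a ∈ M :=
  mem_of_forall_commutant_commute fun y hy => by
    rw [mul_smul_comm, smul_mul_assoc, commutant_mul_comm hy ha]

theorem cfc_real_mem (φ : ℝ → ℝ) (ha : a ∈ M) : cfc φ a ∈ M :=
  mem_of_forall_commutant_commute fun y hy =>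
    ((show Commute a y from (commutant_mul_comm hy ha).symm).cfc_real φ).eq.symm

theorem HasStrongSum.mem {ι : Type*} {v : ι → H →L[ℂ] H} {T : H →L[ℂ] H}
    (hT : HasStrongSum v T) (hv : ∀ i, v i ∈ M) : T ∈ M :=
  mem_of_forall_commutant_commute fun y hy => (hT.mul_left y).unique <| by
    simpa only [commutant_mul_comm hy (hv _)] using hT.mul_right y

theorem closureProjection_mem {K : Submodule ℂ H}
    (hK : ∀ y ∈ M.commutant, K ≤ K.comap (y : H →ₗ[ℂ] H)) : closureProjection K ∈ M := by
  rw [VonNeumannAlgebra.IsStarProjection.mem_iff (isStarProjection_closureProjection K)]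
  intro y hy
  rw [closureProjection, Submodule.range_starProjection]
  exact Submodule.topologicalClosure_mem_invtSubmodule (hK y hy)

theorem closureProjection_range_mem (ha : a ∈ M) : closureProjection a.range ∈ M :=
  closureProjection_mem fun y hy => by
    rintro _ ⟨x, rfl⟩
    exact ⟨y x, (DFunLike.congr_fun (commutant_mul_comm hy ha) x).symm⟩

theorem IsProjection.isStarProjection (hp : IsProjection p) : IsStarProjection p :=
  isStarProjection_iff'.2 hp

theorem isProjection_of_isStarProjection (hp : IsStarProjection p) : IsProjection p :=
  isStarProjection_iff'.1 hp

/-- The closure of `M e H` is invariant under both `M` and its commutant, so the projection onto it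
is central. -/
theorem exists_isCentralProjection_of_forall_mul_mul_eq_zero (he : e ∈ M)
    (h : ∀ x ∈ M, p * x * e = 0) : ∃ z, IsCentralProjection M z ∧ z * e = e ∧ p * z = 0 := by
  set K : Submodule ℂ H := ⨆ x : M, ((x : H →L[ℂ] H) * e).range
  have range_le {x : H →L[ℂ] H} (hx : x ∈ M) : (x * e).range ≤ K :=
    le_iSup (fun x : M => ((x : H →L[ℂ] H) * e).range) ⟨x, hx⟩
  have hzM : closureProjection K ∈ M := closureProjection_mem fun y hy => iSup_le fun x => by
    rintro _ ⟨ξ, rfl⟩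
    refine range_le x.2 ⟨y ξ, ?_⟩
    exact (DFunLike.congr_fun (commutant_mul_comm hy (mul_mem x.2 he)) ξ).symm
  have hzM' : closureProjection K ∈ M.commutant := closureProjection_mem fun y hy =>
    iSup_le fun x => by
      rintro _ ⟨ξ, rfl⟩
      rw [M.commutant_commutant] at hy
      exact range_le (mul_mem hy x.2) ⟨ξ, rfl⟩
  have hKp : K ≤ p.ker := iSup_le fun x => by
    rintro _ ⟨ξ, rfl⟩
    exact DFunLike.congr_fun (h x x.2) ξ
  refine ⟨closureProjection K, ⟨?_, hzM, fun y hy => commutant_mul_comm hzM' hy⟩, ?_,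
    mul_closureProjection_eq_zero hKp⟩
  · exact isProjection_of_isStarProjection (isStarProjection_closureProjection K)
  · exact closureProjection_mul_of_range_le (by simpa only [one_mul] using range_le (one_mem M))

end Membership

section SpectralCutoff

variable {l : ℝ}

/-- The spectral projection of a self-adjoint operator `a` for the interval `(l, ∞)`, realised as
the range projection of the positive part of `a - l`. -/
def spectralCutoff (a : H →L[ℂ] H) (l : ℝ) : H →L[ℂ] H :=
  closureProjection (cfc (fun t : ℝ => max (t - l) 0) a).range

theorem isStarProjection_spectralCutoff (a : H →L[ℂ] H) (l : ℝ) :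
    IsStarProjection (spectralCutoff a l) :=
  isStarProjection_closureProjection _

theorem spectralCutoff_mem (ha : a ∈ M) (l : ℝ) : spectralCutoff a l ∈ M :=
  closureProjection_range_mem (cfc_real_mem _ ha)

theorem spectralCutoff_mul_cfc_posPart (a : H →L[ℂ] H) (l : ℝ) :
    spectralCutoff a l * cfc (fun t : ℝ => max (t - l) 0) a =
      cfc (fun t : ℝ => max (t - l) 0) a :=
  closureProjection_mul_of_range_le le_rfl

theorem cfc_posPart_mul_spectralCutoff (a : H →L[ℂ] H) (l : ℝ) :
    cfc (fun t : ℝ => max (t - l) 0) a * spectralCutoff a l =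
      cfc (fun t : ℝ => max (t - l) 0) a := by
  have hsa : IsSelfAdjoint (cfc (fun t : ℝ => max (t - l) 0) a) := cfc_predicate _ a
  simpa only [star_mul, hsa.star_eq, (isStarProjection_spectralCutoff a l).isSelfAdjoint.star_eq]
    using congrArg star (spectralCutoff_mul_cfc_posPart a l)

theorem cfc_mul_spectralCutoff_congr {φ ψ : ℝ → ℝ} (hφ : Continuous φ) (hψ : Continuous ψ)
    (h : Set.EqOn φ ψ (Set.Ioi l)) (a : H →L[ℂ] H) :
    cfc φ a * spectralCutoff a l = cfc ψ a * spectralCutoff a l := by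
  have hzero : (fun t => (φ t - ψ t) * max (t - l) 0) = fun _ => 0 := by
    ext t
    rcases le_or_gt t l with ht | ht
    · rw [max_eq_right (sub_nonpos.2 ht), mul_zero]
    · rw [h ht, sub_self, zero_mul]
  have hmul : (cfc φ a - cfc ψ a) * cfc (fun t : ℝ => max (t - l) 0) a = 0 := by
    rw [← cfc_sub φ ψ a, ← cfc_mul _ _ a, hzero, cfc_const_zero]
  rw [← sub_eq_zero, ← sub_mul]
  refine mul_closureProjection_eq_zero ?_
  rintro _ ⟨x, rfl⟩
  exact DFunLike.congr_fun hmul x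

theorem smul_spectralCutoff_le (ha : 0 ≤ a) (l : ℝ) : l • spectralCutoff a l ≤ a := by
  set e := spectralCutoff a l
  set g := cfc (fun t : ℝ => max (t - l) 0) a
  have he : IsStarProjection e := isStarProjection_spectralCutoff a l
  have hae : a * e = g + l • e := by
    calc a * e = cfc (fun t : ℝ => t) a * e := by rw [cfc_id' ℝ a]
      _ = cfc (fun t : ℝ => max (t - l) 0 + l) a * e :=
        cfc_mul_spectralCutoff_congr (by fun_prop) (by fun_prop)
          (fun t (ht : l < t) => by rw [max_eq_left (sub_nonneg.2 ht.le), sub_add_cancel]) a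
      _ = (g + algebraMap ℝ _ l) * e := by rw [cfc_add_const l _ a]
      _ = g + l • e := by
        rw [add_mul, cfc_posPart_mul_spectralCutoff, Algebra.algebraMap_eq_smul_one,
          smul_one_mul]
  have hea : e * (a * e) = a * e := by
    rw [hae, mul_add, spectralCutoff_mul_cfc_posPart, mul_smul_comm, he.isIdempotentElem.eq]
  have hcompl : a - a * e = star (1 - e) * a * (1 - e) := by
    have hea' : e * a = e * (a * e) := by
      simpa only [star_mul, he.isSelfAdjoint.star_eq, ha.isSelfAdjoint.star_eq, mul_assoc, eq_comm]
        using congrArg star hea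
    rw [he.one_sub.isSelfAdjoint.star_eq, mul_assoc, mul_sub a, mul_one, sub_mul, one_mul, mul_sub,
      hea', hea, sub_self, sub_zero]
  have hg0 : 0 ≤ g := cfc_nonneg fun t _ => le_max_right _ _
  calc l • e ≤ g + l • e := le_add_of_nonneg_left hg0
    _ = a * e := hae.symm
    _ ≤ a := sub_nonneg.1 (hcompl ▸ star_left_conjugate_nonneg ha _)

theorem spectralCutoff_ne_zero (ha : 0 ≤ a) (ha0 : a ≠ 0) (hl : l < ‖a‖) :
    spectralCutoff a l ≠ 0 := by
  intro he
  have : Nontrivial (H →L[ℂ] H) := ⟨a, 0, ha0⟩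
  have hg : cfc (fun t : ℝ => max (t - l) 0) a = 0 := by
    rw [← cfc_posPart_mul_spectralCutoff, he, mul_zero]
  have hle := norm_apply_le_norm_cfc (fun t : ℝ => max (t - l) 0) a
    (CStarAlgebra.norm_mem_spectrum_of_nonneg ha)
  rw [hg, norm_zero, Real.norm_eq_abs, abs_nonpos_iff] at hle
  exact (sub_pos.2 hl).not_ge (hle ▸ le_max_left _ _)

theorem exists_isSelfAdjoint_conj_mul_spectralCutoff (haM : a ∈ M) (ha : IsSelfAdjoint a)
    (hl : 0 < l) :
    ∃ h ∈ M, IsSelfAdjoint h ∧ h * a * h * spectralCutoff a l = spectralCutoff a l := by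
  set φ : ℝ → ℝ := fun t => (√(max t l))⁻¹
  have hpos (t : ℝ) : 0 < max t l := lt_max_of_lt_right hl
  have hφ : Continuous φ := Continuous.inv₀ (by fun_prop) fun t => (Real.sqrt_pos.2 (hpos t)).ne'
  refine ⟨cfc φ a, cfc_real_mem φ haM, cfc_predicate φ a, ?_⟩
  have heq : Set.EqOn (fun t => φ t * t * φ t) 1 (Set.Ioi l) := fun t (ht : l < t) => by
    have ht0 : 0 < t := hl.trans ht
    simp only [φ, max_eq_left ht.le, Pi.one_apply]
    rw [mul_right_comm, ← mul_inv, Real.mul_self_sqrt ht0.le, inv_mul_cancel₀ ht0.ne']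
  calc cfc φ a * a * cfc φ a * spectralCutoff a l
      = cfc (fun t => φ t * t * φ t) a * spectralCutoff a l := by
        rw [cfc_mul _ _ a, cfc_mul _ _ a, cfc_id' ℝ a]
    _ = cfc 1 a * spectralCutoff a l :=
        cfc_mul_spectralCutoff_congr (by fun_prop) continuous_one heq a
    _ = spectralCutoff a l := by rw [cfc_one ℝ a, one_mul]

end SpectralCutoff

section Comparison

theorem exists_isPartialIsometry_ne_zero (hx : x ∈ M) (hx0 : x ≠ 0) (he : IsStarProjection e)
    (hxe : x * e = x) (hpx : p * x = x) :
    ∃ w ∈ M, w ≠ 0 ∧ IsPartialIsometry w ∧ w * e = w ∧ p * w = w := by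
  set a := star x * x
  have haM : a ∈ M := mul_mem (star_mem hx) hx
  have ha : 0 ≤ a := star_mul_self_nonneg x
  have ha0 : a ≠ 0 := (CStarRing.star_mul_self_ne_zero_iff x).2 hx0
  have hl : 0 < ‖a‖ / 2 := half_pos (norm_pos_iff.2 ha0)
  set c := spectralCutoff a (‖a‖ / 2)
  have hc : IsStarProjection c := isStarProjection_spectralCutoff _ _
  have hc0 : c ≠ 0 := spectralCutoff_ne_zero ha ha0 (half_lt_self (norm_pos_iff.2 ha0))
  have hce : c ≤ e := le_of_smul_le_of_mul_eq hc he hl (smul_spectralCutoff_le ha _)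
    (by rw [mul_assoc, hxe])
  obtain ⟨h, hhM, hh, hhc⟩ := exists_isSelfAdjoint_conj_mul_spectralCutoff haM ha.isSelfAdjoint hl
  have hw : star (x * h * c) * (x * h * c) = c := by
    calc star (x * h * c) * (x * h * c) = c * (h * a * h * c) := by
          rw [star_mul, star_mul, hh.star_eq, hc.isSelfAdjoint.star_eq]
          simp only [a, mul_assoc]
      _ = c := by rw [hhc, hc.isIdempotentElem.eq]
  refine ⟨x * h * c, mul_mem (mul_mem hx hhM) (spectralCutoff_mem haM _), ?_,
    isPartialIsometry_of_isStarProjection (hw.symm ▸ hc), ?_, ?_⟩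
  · intro h0
    rw [h0, mul_zero] at hw
    exact hc0 hw.symm
  · rw [mul_assoc, (hc.le_iff_mul_eq_left he).1 hce]
  · rw [← mul_assoc, ← mul_assoc, hpx]

theorem exists_isPartialIsometry_forall_mul_mul_eq_zero (heM : e ∈ M) (hpM : p ∈ M)
    (he : IsStarProjection e) (hp : IsStarProjection p) :
    ∃ T ∈ M, IsPartialIsometry T ∧ T * e = T ∧ p * T = T ∧
      ∀ x ∈ M, (p - T * star T) * x * (e - star T * T) = 0 := by
  have : Std.Symm (StarOrthogonal (A := H →L[ℂ] H)) := ⟨fun _ _ => StarOrthogonal.symm⟩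
  obtain ⟨S, hS, hSo, hmax⟩ := exists_maximal_pairwise
    {v : H →L[ℂ] H | v ∈ M ∧ IsPartialIsometry v ∧ v * e = v ∧ p * v = v} StarOrthogonal
  have hSv (v : S) : IsPartialIsometry (v : H →L[ℂ] H) := (hS v.2).2.1
  have ho : Pairwise fun v w : S => StarOrthogonal (v : H →L[ℂ] H) w := fun v w hvw =>
    hSo v.2 w.2 (Subtype.coe_injective.ne hvw)
  obtain ⟨T, hT⟩ := exists_hasStrongSum hSv ho
  have hTM : T ∈ M := hT.mem fun v => (hS v.2).1
  have hTv : IsPartialIsometry T := hT.isPartialIsometry hSv ho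
  have hTe : T * e = T := hT.mul_right_eq_self fun v => (hS v.2).2.2.1
  have hpT : p * T = T := hT.mul_left_eq_self fun v => (hS v.2).2.2.2
  refine ⟨T, hTM, hTv, hTe, hpT, fun x hx => by_contra fun hx0 => ?_⟩
  have hr : IsStarProjection (p - T * star T) := hTv.isStarProjection_sub_mul_star_self hp hpT
  have hs : IsStarProjection (e - star T * T) := hTv.isStarProjection_sub_star_mul_self he hTe
  obtain ⟨w, hwM, hw0, hwv, hws, hrw⟩ := exists_isPartialIsometry_ne_zero
    (mul_mem (mul_mem (sub_mem hpM (mul_mem hTM (star_mem hTM))) hx)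
      (sub_mem heM (mul_mem (star_mem hTM) hTM))) hx0 hs
    (by rw [mul_assoc, hs.isIdempotentElem.eq])
    (by rw [← mul_assoc, ← mul_assoc, hr.isIdempotentElem.eq])
  have hTw : StarOrthogonal T w :=
    hTv.starOrthogonal_of_sub_mul he.isSelfAdjoint hp.isSelfAdjoint hTe hpT hws hrw
  have hwS : w ∈ S := by
    refine hmax w ⟨hwM, hwv, ?_, ?_⟩ fun v hv => (hT.starOrthogonal hSv ho hTw ⟨v, hv⟩).symm
    · rw [← hws, mul_assoc, sub_mul, he.isIdempotentElem.eq, mul_assoc, hTe]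
    · rw [← hrw, ← mul_assoc, mul_sub, hp.isIdempotentElem.eq, ← mul_assoc, hpT]
  have hwself : T * star T * w = w := hT.mul_star_self_mul hSv ho ⟨w, hwS⟩
  rw [mul_assoc, hTw.1, mul_zero] at hwself
  exact hw0 hwself.symm

end Comparison

section FiniteProjection

/-- The partial isometries in `M` which identify `e` with a subprojection of `f`. -/
def copies (M : VonNeumannAlgebra H) (e f : H →L[ℂ] H) : Set (H →L[ℂ] H) :=
  {v | v ∈ M ∧ star v * v = e ∧ f * v = v}

theorem IsFiniteProjection.mul_star_self_eq_of_mem_copies (hf : IsFiniteProjection M f)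
    {w : H →L[ℂ] H} (hw : w ∈ copies M f f) : w * star w = f := by
  obtain ⟨hwM, hwf, hfw⟩ := hw
  have hwproj : IsStarProjection (w * star w) := IsPartialIsometry.isStarProjection_mul_star_self
    (isPartialIsometry_of_isStarProjection (hwf.symm ▸ hf.2.1.isStarProjection))
  exact hf.2.2 _ (mul_mem hwM (star_mem hwM)) (isProjection_of_isStarProjection hwproj)
    (by rw [← mul_assoc, hfw]) ⟨star w, star_mem hwM, by rw [star_star], by rw [star_star, hwf]⟩

theorem IsFiniteProjection.mul_star_self_eq (hf : IsFiniteProjection M f) {v : H →L[ℂ] H}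
    (hvM : v ∈ M) (hv : IsPartialIsometry v) (hvf : v * f = v) (hle : star v * v * v = v) :
    v * star v = star v * v := by
  have hfp := hf.2.1.isStarProjection
  have hfv' : f * star v = star v := by
    simpa only [star_mul, hfp.isSelfAdjoint.star_eq] using congrArg star hvf
  have hfv : f * v = v := by rw [← hle, mul_assoc, ← mul_assoc, hfv']
  set d := f - star v * v
  have hd : IsStarProjection d := hv.isStarProjection_sub_star_mul_self hfp hvf
  have hdv : d * v = 0 := by rw [sub_mul, hfv, hle, sub_self]
  have hvd : v * d = 0 := hv.mul_sub_star_mul_self hvf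
  have hdv' : d * star v = 0 := by
    simpa only [star_mul, hd.isSelfAdjoint.star_eq, star_zero] using congrArg star hvd
  have hfd : f * d = d := by rw [mul_sub, hfp.isIdempotentElem.eq, ← mul_assoc, hfv']
  have hcopy : v + d ∈ copies M f f := by
    refine ⟨add_mem hvM (sub_mem hf.1 (mul_mem (star_mem hvM) hvM)), ?_, ?_⟩
    · rw [star_add_mul_add_of_mul_eq_zero hd hdv, add_sub_cancel]
    · rw [mul_add, hfv, hfd]
  have heq : v * star v + d = f := by
    calc v * star v + d = (v + d) * star (v + d) := by
          simpa only [star_add, star_star, hd.isSelfAdjoint.star_eq] using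
            (star_add_mul_add_of_mul_eq_zero hd hdv').symm
      _ = f := hf.mul_star_self_eq_of_mem_copies hcopy
  rwa [← eq_sub_iff_add_eq, sub_sub_cancel] at heq

theorem isPartialIsometry_of_mem_copies (he : IsStarProjection e) {v : H →L[ℂ] H}
    (hv : v ∈ copies M e f) : IsPartialIsometry v :=
  isPartialIsometry_of_isStarProjection (hv.2.1.symm ▸ he)

theorem mul_eq_self_of_mem_copies (he : IsStarProjection e) {v : H →L[ℂ] H}
    (hv : v ∈ copies M e f) : v * e = v := by
  rw [← hv.2.1, ← mul_assoc, isPartialIsometry_of_mem_copies he hv]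

theorem IsFiniteProjection.eq_zero_of_nat_copies (hf : IsFiniteProjection M f)
    (he : IsStarProjection e) {v : ℕ → H →L[ℂ] H} (hv : ∀ n, v n ∈ copies M e f)
    (ho : Pairwise fun m n => star (v m) * v n = 0) : e = 0 := by
  have hve (n : ℕ) : v n * e = v n := mul_eq_self_of_mem_copies he (hv n)
  set g : ℕ → H →L[ℂ] H := fun n => v (n + 1) * star (v n)
  have hstar (n : ℕ) : star (g n) = v n * star (v (n + 1)) := by rw [star_mul, star_star]
  have hgv (n : ℕ) : g n * v n = v (n + 1) := by rw [mul_assoc, (hv n).2.1, hve]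
  have hgv' (n : ℕ) : star (g n) * v (n + 1) = v n := by
    rw [hstar, mul_assoc, (hv (n + 1)).2.1, hve]
  have hg (n : ℕ) : IsPartialIsometry (g n) := by
    rw [IsPartialIsometry, mul_assoc, ← mul_assoc (star (g n)), hgv', ← mul_assoc, hgv]
  have hgo : Pairwise fun m n => StarOrthogonal (g m) (g n) := fun m n hmn => by
    constructor
    · rw [hstar, mul_assoc, ← mul_assoc (star _), ho (Nat.succ_injective.ne hmn), zero_mul,
        mul_zero]
    · rw [hstar, mul_assoc, ← mul_assoc (star _), ho hmn, zero_mul, mul_zero]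
  obtain ⟨T, hT⟩ := exists_hasStrongSum hg hgo
  have hTM : T ∈ M := hT.mem fun n => mul_mem (hv (n + 1)).1 (star_mem (hv n).1)
  have hTf : T * f = T := hT.mul_right_eq_self fun n => by
    have hf' : star (v n) * f = star (v n) := by
      simpa only [star_mul, hf.2.1.2] using congrArg star (hv n).2.2
    rw [mul_assoc, hf']
  have hinit (n : ℕ) : star T * T * v n = v n := by
    have h : star T * T * star (g n) = star (g n) := by
      simpa only [star_mul, star_star] using congrArg star (hT.mul_star_mul_self hg hgo n)
    rw [← hgv' n, ← mul_assoc, h]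
  have heq : T * star T = star T * T :=
    hf.mul_star_self_eq hTM (hT.isPartialIsometry hg hgo) hTf <|
      hT.mul_left_eq_self fun n => by rw [← mul_assoc, hinit]
  have hzero : star (v 0) * T = 0 := by
    have h (n : ℕ) : star (v 0) * g n = 0 := by
      rw [← mul_assoc, ho n.succ_ne_zero.symm, zero_mul]
    exact (h 0) ▸ (hT.mul_left (star (v 0))).eq_single 0 fun n _ => h n
  calc e = star (v 0) * (star T * T * v 0) := by rw [hinit, (hv 0).2.1]
    _ = star (v 0) * T * star T * v 0 := by rw [← heq]; simp only [mul_assoc]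
    _ = 0 := by rw [hzero, zero_mul, zero_mul]

theorem IsFiniteProjection.finite_of_pairwise_copies (hf : IsFiniteProjection M f)
    (he : IsStarProjection e) (he0 : e ≠ 0) {S : Set (H →L[ℂ] H)} (hS : S ⊆ copies M e f)
    (ho : S.Pairwise fun v w => star v * w = 0) : S.Finite := by
  by_contra hinf
  set v := Set.Infinite.natEmbedding S hinf
  exact he0 <| hf.eq_zero_of_nat_copies he (v := fun n => v n) (fun n => hS (v n).2)
    fun m n hmn => ho (v m).2 (v n).2 (Subtype.coe_injective.ne (v.injective.ne hmn))

theorem IsFiniteProjection.exists_maximal_copies (hf : IsFiniteProjection M f)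
    (he : IsStarProjection e) (he0 : e ≠ 0) :
    ∃ s : Finset (H →L[ℂ] H), ↑s ⊆ copies M e f ∧
      (s : Set (H →L[ℂ] H)).Pairwise (fun v w => star v * w = 0) ∧
      ∀ w ∈ copies M e f, (∑ v ∈ s, v * star v) * w ≠ 0 := by
  have : Std.Symm fun v w : H →L[ℂ] H => star v * w = 0 := ⟨fun _ _ => star_mul_eq_zero_symm⟩
  obtain ⟨S, hS, ho, hmax⟩ :=
    exists_maximal_pairwise (copies M e f) fun v w => star v * w = 0
  lift S to Finset (H →L[ℂ] H) using hf.finite_of_pairwise_copies he he0 hS ho with s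
  have hs (v) (hv : v ∈ s) : IsPartialIsometry v := isPartialIsometry_of_mem_copies he (hS hv)
  set q := ∑ v ∈ s, v * star v
  have hq : IsSelfAdjoint q := (isStarProjection_sum_mul_star_self hs ho).isSelfAdjoint
  have hqv {v} (hv : v ∈ s) : q * v = v := sum_mul_star_self_mul hs ho hv
  refine ⟨s, hS, ho, fun w hw hqw => he0 ?_⟩
  have hws : w ∈ s := hmax w hw fun v hv => star_mul_eq_zero_symm <| by
    rw [← hqv hv, star_mul, hq.star_eq, mul_assoc, hqw, mul_zero]
  rw [← hw.2.1, ← hqv hws, hqw, mul_zero]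

theorem IsFiniteProjection.exists_isCentralProjection_mul_eq_sum (hf : IsFiniteProjection M f)
    (heM : e ∈ M) (he : IsStarProjection e) (he0 : e ≠ 0) (hef : e ≤ f) :
    ∃ z, IsCentralProjection M z ∧ z * f ≠ 0 ∧ ∃ s : Finset (H →L[ℂ] H),
      (∀ v ∈ s, v ∈ M ∧ star v * v ≤ e) ∧ z * f = z * ∑ v ∈ s, v * star v := by
  classical
  obtain ⟨s, hs, ho, hmax⟩ := hf.exists_maximal_copies he he0
  have hfp := hf.2.1.isStarProjection
  set q := ∑ v ∈ s, v * star v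
  have hqM : q ∈ M := sum_mem fun v hv => mul_mem (hs hv).1 (star_mem (hs hv).1)
  have hq : IsStarProjection q := isStarProjection_sum_mul_star_self
    (fun v hv => isPartialIsometry_of_mem_copies he (hs hv)) ho
  have hfq : f * q = q := by
    rw [Finset.mul_sum]
    exact Finset.sum_congr rfl fun v hv => by rw [← mul_assoc, (hs hv).2.2]
  have hr : IsStarProjection (f - q) := hq.sub_of_mul_eq_right hfp hfq
  obtain ⟨T, hTM, hT, hTe, hrT, hcomp⟩ :=
    exists_isPartialIsometry_forall_mul_mul_eq_zero heM (sub_mem hf.1 hqM) he hr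
  have hqr : q * (f - q) = 0 := by
    rw [mul_sub, (hq.le_iff_mul_eq_left hfp).1 (hq.le_of_mul_eq_right hfp hfq),
      hq.isIdempotentElem.eq, sub_self]
  have hfr : f * (f - q) = f - q := by rw [mul_sub, hfp.isIdempotentElem.eq, hfq]
  have hTTe : star T * T ≠ e := fun h => by
    refine hmax T ⟨hTM, h, ?_⟩ ?_
    · rw [← hrT, ← mul_assoc, hfr]
    · rw [← hrT, ← mul_assoc, hqr, zero_mul]
  obtain ⟨z, hz, hze, hrz⟩ := exists_isCentralProjection_of_forall_mul_mul_eq_zero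
    (sub_mem heM (mul_mem (star_mem hTM) hTM)) hcomp
  refine ⟨z, hz, fun hzf => sub_ne_zero.2 hTTe.symm ?_, insert T s, ?_, ?_⟩
  · have hd : IsStarProjection (e - star T * T) := hT.isStarProjection_sub_star_mul_self he hTe
    have hdf : e - star T * T ≤ f := (sub_le_self e (star_mul_self_nonneg T)).trans hef
    rw [← hze, ← (hd.le_iff_mul_eq_right hfp).1 hdf, ← mul_assoc, hzf, zero_mul]
  · refine Finset.forall_mem_insert _ _ _ |>.2 ⟨⟨hTM, ?_⟩, fun v hv => ⟨(hs hv).1, (hs hv).2.1.le⟩⟩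
    exact sub_nonneg.1 (hT.isStarProjection_sub_star_mul_self he hTe).nonneg
  · have hTs : T ∉ s := fun h => hTTe (hs h).2.1
    rw [Finset.sum_insert hTs, ← sub_eq_zero, ← mul_sub, ← hrz,
      hz.2.2 _ (sub_mem hf.1 (add_mem (mul_mem hTM (star_mem hTM)) hqM)), add_comm, sub_sub]

end FiniteProjection

section Trace

/-- A trace on the positive part of `M`, not necessarily faithful, normal or semifinite; only its
values on positive elements of `M` are meaningful. -/
structure IsTrace (M : VonNeumannAlgebra H) (τ : (H →L[ℂ] H) → ENNReal) : Prop where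
  map_add : ∀ x ∈ M, ∀ y ∈ M, 0 ≤ x → 0 ≤ y → τ (x + y) = τ x + τ y
  map_smul : ∀ (c : ℝ), ∀ x ∈ M, 0 ≤ c → 0 ≤ x → τ (c • x) = ENNReal.ofReal c * τ x
  map_star_mul_self : ∀ x ∈ M, τ (star x * x) = τ (x * star x)

variable {τ : (H →L[ℂ] H) → ENNReal}

theorem IsFNSTrace.isTrace (hτ : IsFNSTrace M τ) : IsTrace M τ where
  map_add x hx y hy := hτ.additive x y hx hy
  map_smul c x hx hc := hτ.homogeneous c x hc hx
  map_star_mul_self := hτ.tracial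

namespace IsTrace

theorem map_zero (hτ : IsTrace M τ) : τ 0 = 0 := by
  simpa using hτ.map_smul 0 0 (zero_mem M) le_rfl le_rfl

theorem mono (hτ : IsTrace M τ) {y : H →L[ℂ] H} (hx : x ∈ M) (hy : y ∈ M) (hx0 : 0 ≤ x)
    (hxy : x ≤ y) : τ x ≤ τ y := by
  calc τ x ≤ τ x + τ (y - x) := le_self_add
    _ = τ y := by
      rw [← hτ.map_add x hx _ (sub_mem hy hx) hx0 (sub_nonneg.2 hxy), add_sub_cancel]

theorem map_sum_mul_star_self (hτ : IsTrace M τ) {ι : Type*} {s : Finset ι} {v : ι → H →L[ℂ] H}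
    (hv : ∀ i ∈ s, v i ∈ M) :
    τ (∑ i ∈ s, v i * star (v i)) = ∑ i ∈ s, τ (star (v i) * v i) := by
  classical
  induction s using Finset.induction_on with
  | empty => simpa using hτ.map_zero
  | insert i s hi ih =>
    have hvs (j) (hj : j ∈ s) : v j ∈ M := hv j (Finset.mem_insert_of_mem hj)
    have hvi : v i ∈ M := hv i (Finset.mem_insert_self i s)
    rw [Finset.sum_insert hi, Finset.sum_insert hi, hτ.map_add _ (mul_mem hvi (star_mem hvi)) _
      (sum_mem fun j hj => mul_mem (hvs j hj) (star_mem (hvs j hj))) (mul_star_self_nonneg _)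
      (Finset.sum_nonneg fun j _ => mul_star_self_nonneg _), ih hvs, hτ.map_star_mul_self _ hvi]

theorem map_mul_sum_lt_top (hτ : IsTrace M τ) (hz : IsCentralProjection M z) (he : e ∈ M)
    (hτe : τ e < ⊤) {s : Finset (H →L[ℂ] H)} (hs : ∀ v ∈ s, v ∈ M ∧ star v * v ≤ e) :
    τ (z * ∑ v ∈ s, v * star v) < ⊤ := by
  have hzp : IsStarProjection z := hz.1.isStarProjection
  have hzv (v) (hv : v ∈ s) : z * v ∈ M := mul_mem hz.2.1 (hs v hv).1
  have hsum : z * ∑ v ∈ s, v * star v = ∑ v ∈ s, z * v * star (z * v) := by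
    rw [Finset.mul_sum]
    refine Finset.sum_congr rfl fun v hv => ?_
    have hvv : v * star v ∈ M := mul_mem (hs v hv).1 (star_mem (hs v hv).1)
    rw [star_mul, hzp.isSelfAdjoint.star_eq, mul_assoc z v, ← mul_assoc v, ← hz.2.2 _ hvv,
      ← mul_assoc z z, hzp.isIdempotentElem.eq]
  have hle (v) (hv : v ∈ s) : star (z * v) * (z * v) ≤ e := by
    calc star (z * v) * (z * v) = star v * z * v := by
          rw [star_mul, hzp.isSelfAdjoint.star_eq, mul_assoc, ← mul_assoc z,
            hzp.isIdempotentElem.eq, mul_assoc]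
      _ ≤ star v * 1 * v := star_left_conjugate_le_conjugate hzp.le_one v
      _ ≤ e := by rw [mul_one]; exact (hs v hv).2
  rw [hsum, hτ.map_sum_mul_star_self hzv]
  exact ENNReal.sum_lt_top.2 fun v hv => hτe.trans_le' <|
    hτ.mono (mul_mem (star_mem (hzv v hv)) (hzv v hv)) he (star_mul_self_nonneg _) (hle v hv)

theorem exists_isStarProjection_lt_top (hτ : IsTrace M τ) (hx : x ∈ M) (hx0 : 0 ≤ x)
    (hx' : x ≠ 0) (hτx : τ x < ⊤) (hf : IsStarProjection f) (hxf : x ≤ f) :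
    ∃ e ∈ M, IsStarProjection e ∧ e ≠ 0 ∧ e ≤ f ∧ τ e < ⊤ := by
  have hnorm : 0 < ‖x‖ := norm_pos_iff.2 hx'
  set l := ‖x‖ / 2
  have hl : 0 < l := half_pos hnorm
  set e := spectralCutoff x l
  have heM : e ∈ M := spectralCutoff_mem hx l
  have he : IsStarProjection e := isStarProjection_spectralCutoff x l
  have hle : l • e ≤ x := smul_spectralCutoff_le hx0 l
  refine ⟨e, heM, he, spectralCutoff_ne_zero hx0 hx' (half_lt_self hnorm),
    le_of_smul_le_of_mul_eq he hf hl (hle.trans hxf) hf.isIdempotentElem, ?_⟩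
  have hfin : ENNReal.ofReal l * τ e < ⊤ := by
    rw [← hτ.map_smul l e heM hl.le he.nonneg]
    exact hτx.trans_le' (hτ.mono (real_smul_mem l heM) hx (smul_nonneg hl.le he.nonneg) hle)
  exact ENNReal.lt_top_of_mul_ne_top_right hfin.ne (ENNReal.ofReal_pos.2 hl).ne'

end IsTrace

end Trace

end VNA

open VNA in
theorem statement_1_general {H : Type*} [NormedAddCommGroup H] [InnerProductSpace ℂ H]
    [CompleteSpace H] (M : VonNeumannAlgebra H) (τ : (H →L[ℂ] H) → ENNReal)
    (hτ : IsTrace M τ) (f : H →L[ℂ] H) (hf : IsFiniteProjection M f)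
    (hfin : ∃ x ∈ M, 0 ≤ x ∧ x ≤ f ∧ x ≠ 0 ∧ τ x < ⊤) :
    ∃ z, IsCentralProjection M z ∧ z * f ≠ 0 ∧ τ (z * f) < ⊤ := by
  obtain ⟨x, hxM, hx, hxf, hx0, hτx⟩ := hfin
  obtain ⟨e, heM, he, he0, hef, hτe⟩ :=
    hτ.exists_isStarProjection_lt_top hxM hx hx0 hτx hf.2.1.isStarProjection hxf
  obtain ⟨z, hz, hzf, s, hs, hsum⟩ := hf.exists_isCentralProjection_mul_eq_sum heM he he0 hef
  exact ⟨z, hz, hzf, hsum ▸ hτ.map_mul_sum_lt_top hz heM hτe hs⟩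

open VNA in
/-- If `f` is a nonzero finite projection of `M`, there is a central
projection `z` with `z f ≠ 0` and `τ(z f) < ∞`. -/
theorem statement_1 {H : Type*} [NormedAddCommGroup H] [InnerProductSpace ℂ H]
    [CompleteSpace H] (M : VonNeumannAlgebra H) (τ : (H →L[ℂ] H) → ENNReal)
    (hτ : IsFNSTrace M τ) (f : H →L[ℂ] H)
    (hf : IsFiniteProjection M f) (hf0 : f ≠ 0) :
    ∃ z, IsCentralProjection M z ∧ z * f ≠ 0 ∧ τ (z * f) < ⊤ :=
  statement_1_general M τ hτ.isTrace f hf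
    (hτ.semifinite f hf.1 hf.2.1.isStarProjection.nonneg hf0)
end
end

section
/- Let M be a von Neumann algebra with a faithful normal semifinite trace τ and let α ∈ M^n (n ≥ 1) be a commuting self-adjoint n-tuple. For every τ-finite projection q ∈ M and every ε > 0 there exists a τ-finite projection p ∈ M with p ≥ q and ‖[p, α(j)]‖ ≤ ε for all 1 ≤ j ≤ n. -/
open ContinuousLinearMap Filter Topology

noncomputable section

/- The tuple `α` generates an abelian von Neumann algebra, which is the norm closed span of its
projections, so `α` is approximated in norm by linear combinations of finitely many commuting
projections of `M`. It is therefore enough to enlarge `q` to a τ-finite projection that commutes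
exactly with given commuting projections `e`. They are treated one after the other: replacing `p` by
`R(ep) + R((1 - e)p)`, where `R` denotes the range projection, makes it commute with `e`, keeps it
commuting with the earlier projections, and at most doubles its trace. The last point is
`τ(R(x)) ≤ τ(p)` whenever `xp = x`: for `s = xx*` the projection `R(x)` is the supremum of the
elements `s(s + δ)⁻¹ = bb*` with `b = (s + δ)^(-1/2) x`, and `τ(bb*) = τ(b*b) ≤ τ(p)` because
`b*b` is a contraction supported under `p`. -/

namespace VNA

section RangeProjection

variable {𝕜 E : Type*} [RCLike 𝕜] [NormedAddCommGroup E] [InnerProductSpace 𝕜 E] [CompleteSpace E]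

/-- The range projection of `x`: the orthogonal projection onto the closure of its range. -/
def rangeProjection (x : E →L[𝕜] E) : E →L[𝕜] E :=
  x.range.topologicalClosure.starProjection

lemma isStarProjection_rangeProjection (x : E →L[𝕜] E) : IsStarProjection (rangeProjection x) :=
  isStarProjection_starProjection

lemma rangeProjection_apply_mem (x : E →L[𝕜] E) (v : E) :
    rangeProjection x v ∈ closure (Set.range x) :=
  Submodule.starProjection_apply_mem x.range.topologicalClosure v

lemma rangeProjection_mul_self (x : E →L[𝕜] E) : rangeProjection x * x = x := by
  ext v
  exact Submodule.starProjection_eq_self_iff.2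
    (Submodule.le_topologicalClosure _ (LinearMap.mem_range_self _ v))

lemma apply_sub_rangeProjection_apply (x : E →L[𝕜] E) (v : E) :
    star x (v - rangeProjection x v) = 0 := by
  have hv : v - rangeProjection x v ∈ x.rangeᗮ :=
    Submodule.orthogonal_le (Submodule.le_topologicalClosure _)
      (Submodule.sub_starProjection_mem_orthogonal v)
  rwa [orthogonal_range] at hv

lemma mul_rangeProjection_congr {x z w : E →L[𝕜] E} (h : z * x = w * x) :
    z * rangeProjection x = w * rangeProjection x := by
  ext v
  have hsub : Set.range x ⊆ {u | z u = w u} := by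
    rintro _ ⟨u, rfl⟩
    exact DFunLike.congr_fun h u
  exact closure_minimal hsub (isClosed_eq z.continuous w.continuous) (rangeProjection_apply_mem x v)

lemma commute_rangeProjection {x z : E →L[𝕜] E} (h : Commute z x) (h' : Commute (star z) x) :
    Commute z (rangeProjection x) := by
  set r := rangeProjection x
  have hr_star : star r = r := (isStarProjection_rangeProjection x).isSelfAdjoint
  have invariant {y : E →L[𝕜] E} (hy : Commute y x) : r * y * r = y * r :=
    mul_rangeProjection_congr <| by
      rw [mul_assoc, hy.eq, ← mul_assoc, rangeProjection_mul_self]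
  calc z * r = r * z * r := (invariant h).symm
    _ = star (r * star z * r) := by simp only [star_mul, star_star, hr_star, mul_assoc]
    _ = r * z := by rw [invariant h', star_mul, star_star, hr_star]

lemma rangeProjection_mul_star (x : E →L[𝕜] E) :
    rangeProjection (x * star x) = rangeProjection x := by
  have h : (x * star x).range.topologicalClosure = x.range.topologicalClosure := by
    rw [← Submodule.orthogonal_orthogonal_eq_closure, ← Submodule.orthogonal_orthogonal_eq_closure,
      orthogonal_range, orthogonal_range]
    congr 1
    rw [← star_eq_adjoint, ← star_eq_adjoint, star_mul, star_star]
    exact ker_self_comp_adjoint x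
  simp only [rangeProjection, h]

end RangeProjection

section CommutingHull

variable {𝕜 E : Type*} [RCLike 𝕜] [NormedAddCommGroup E] [InnerProductSpace 𝕜 E] [CompleteSpace E]

/-- The projection `R(ep) + R((1 - e)p)`, with `R` the range projection. For projections `e` and
`p` it is the smallest projection above `p` that commutes with `e`. -/
def commutingHull (e p : E →L[𝕜] E) : E →L[𝕜] E :=
  rangeProjection (e * p) + rangeProjection ((1 - e) * p)

variable {e p : E →L[𝕜] E}

lemma mul_rangeProjection_mul (he : IsStarProjection e) (x : E →L[𝕜] E) :
    e * rangeProjection (e * x) = rangeProjection (e * x) := by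
  have h : e * (e * x) = 1 * (e * x) := by rw [← mul_assoc, he.isIdempotentElem.eq, one_mul]
  rw [mul_rangeProjection_congr h, one_mul]

lemma rangeProjection_mul_mul (he : IsStarProjection e) (x : E →L[𝕜] E) :
    rangeProjection (e * x) * e = rangeProjection (e * x) := by
  simpa only [star_mul, he.isSelfAdjoint.star_eq,
    (isStarProjection_rangeProjection _).isSelfAdjoint.star_eq]
    using congrArg star (mul_rangeProjection_mul he x)

lemma rangeProjection_mul_mul_one_sub (he : IsStarProjection e) (x : E →L[𝕜] E) :
    rangeProjection (e * x) * (1 - e) = 0 := by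
  rw [mul_sub, mul_one, rangeProjection_mul_mul he, sub_self]

lemma rangeProjection_one_sub_mul_mul (he : IsStarProjection e) (x : E →L[𝕜] E) :
    rangeProjection ((1 - e) * x) * e = 0 := by
  simpa only [sub_sub_cancel] using rangeProjection_mul_mul_one_sub he.one_sub x

lemma isStarProjection_commutingHull (he : IsStarProjection e) (p : E →L[𝕜] E) :
    IsStarProjection (commutingHull e p) := by
  refine (isStarProjection_rangeProjection _).add (isStarProjection_rangeProjection _) ?_
  rw [← mul_rangeProjection_mul he.one_sub p, ← mul_assoc, rangeProjection_mul_mul_one_sub he,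
    zero_mul]

lemma commutingHull_mul_self (he : IsStarProjection e) (p : E →L[𝕜] E) :
    commutingHull e p * p = p := by
  set r := rangeProjection (e * p) with hr
  set r' := rangeProjection ((1 - e) * p) with hr'
  have hdecomp : p = e * p + (1 - e) * p := by rw [← add_mul, add_sub_cancel, one_mul]
  calc (r + r') * p
      = r * (e * p) + r * (1 - e) * p + (r' * e * p + r' * ((1 - e) * p)) := by
        rw [mul_assoc, mul_assoc, ← mul_add, ← mul_add, ← hdecomp, add_mul]
    _ = e * p + (1 - e) * p := by
        rw [hr, hr', rangeProjection_mul_mul_one_sub he, rangeProjection_one_sub_mul_mul he,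
          rangeProjection_mul_self, rangeProjection_mul_self, zero_mul, add_zero, zero_add]
    _ = p := hdecomp.symm

lemma commute_self_commutingHull (he : IsStarProjection e) (p : E →L[𝕜] E) :
    Commute e (commutingHull e p) := by
  have hcomm {f : E →L[𝕜] E} (hf : IsStarProjection f) : Commute f (rangeProjection (f * p)) :=
    (mul_rangeProjection_mul hf p).trans (rangeProjection_mul_mul hf p).symm
  have hcompl := (Commute.one_left _).sub_left (hcomm he.one_sub)
  rw [sub_sub_cancel] at hcompl
  exact (hcomm he).add_right hcompl

lemma commute_commutingHull {z : E →L[𝕜] E} (hz : IsSelfAdjoint z) (he : Commute z e)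
    (hp : Commute z p) : Commute z (commutingHull e p) := by
  have hcomm {x : E →L[𝕜] E} (h : Commute z x) : Commute z (rangeProjection x) :=
    commute_rangeProjection h (hz.star_eq.symm ▸ h)
  exact (hcomm (he.mul_right hp)).add_right
    (hcomm (((Commute.one_right z).sub_right he).mul_right hp))

end CommutingHull

section ApproxSupport

variable {A : Type*} [CStarAlgebra A] [PartialOrder A] [StarOrderedRing A] {s : A} {δ δ' : ℝ}

/-- The approximate support `s (s + δ)⁻¹` of a positive element `s`, for `δ > 0`. As `δ` decreases
to `0` it increases to the support projection of `s` whenever that exists. -/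
def approxSupport (s : A) (δ : ℝ) : A :=
  cfc (fun t : ℝ ↦ t / (t + δ)) s

lemma add_pos_of_mem_spectrum (hs : 0 ≤ s) (hδ : 0 < δ) {t : ℝ} (ht : t ∈ spectrum ℝ s) :
    0 < t + δ :=
  add_pos_of_nonneg_of_pos (spectrum_nonneg_of_nonneg hs ht) hδ

lemma continuousOn_div_add (hs : 0 ≤ s) (hδ : 0 < δ) :
    ContinuousOn (fun t : ℝ ↦ t / (t + δ)) (spectrum ℝ s) :=
  ContinuousOn.div (by fun_prop) (by fun_prop) fun _ ht ↦ (add_pos_of_mem_spectrum hs hδ ht).ne'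

lemma approxSupport_nonneg (hs : 0 ≤ s) (hδ : 0 < δ) : 0 ≤ approxSupport s δ :=
  cfc_nonneg fun _ ht ↦
    div_nonneg (spectrum_nonneg_of_nonneg hs ht) (add_pos_of_mem_spectrum hs hδ ht).le

lemma norm_approxSupport_le_one (hs : 0 ≤ s) (hδ : 0 < δ) : ‖approxSupport s δ‖ ≤ 1 := by
  rw [CStarAlgebra.norm_le_one_iff_of_nonneg _ (approxSupport_nonneg hs hδ)]
  refine cfc_le_one _ _ fun t ht ↦ ?_
  rw [div_le_one (add_pos_of_mem_spectrum hs hδ ht)]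
  linarith

lemma approxSupport_le_approxSupport (hs : 0 ≤ s) (hδ : 0 < δ) (h : δ ≤ δ') :
    approxSupport s δ' ≤ approxSupport s δ := by
  refine cfc_mono (fun t ht ↦ ?_) (continuousOn_div_add hs (hδ.trans_le h))
    (continuousOn_div_add hs hδ)
  have ht₀ := spectrum_nonneg_of_nonneg hs ht
  gcongr

lemma approxSupport_mul_self (hs : 0 ≤ s) (hδ : 0 < δ) :
    approxSupport s δ * s = s - δ • approxSupport s δ := by
  have hcont := continuousOn_div_add hs hδ
  have hid : cfc (fun t : ℝ ↦ t) s = s := cfc_id' ℝ s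
  have key : cfc (fun t : ℝ ↦ t / (t + δ) * t) s = cfc (fun t : ℝ ↦ t - δ * (t / (t + δ))) s := by
    refine cfc_congr fun t ht ↦ ?_
    have := (add_pos_of_mem_spectrum hs hδ ht).ne'
    field_simp
    ring
  rw [cfc_mul _ _ s hcont, cfc_sub (fun t ↦ t) _ s continuousOn_id (hcont.const_mul δ),
    cfc_const_mul δ _ s hcont, hid] at key
  exact key

lemma approxSupport_eq_conjugate (hs : 0 ≤ s) (hδ : 0 < δ) :
    cfc (fun t : ℝ ↦ (√(t + δ))⁻¹) s * s * cfc (fun t : ℝ ↦ (√(t + δ))⁻¹) s =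
      approxSupport s δ := by
  have hcont : ContinuousOn (fun t : ℝ ↦ (√(t + δ))⁻¹) (spectrum ℝ s) :=
    ContinuousOn.inv₀ (by fun_prop) fun _ ht ↦
      (Real.sqrt_pos.2 (add_pos_of_mem_spectrum hs hδ ht)).ne'
  have hid : cfc (fun t : ℝ ↦ t) s = s := cfc_id' ℝ s
  conv_lhs => enter [1, 2]; rw [← hid]
  rw [← cfc_mul _ (fun t ↦ t) s hcont continuousOn_id,
    ← cfc_mul (fun t ↦ (√(t + δ))⁻¹ * t) _ s (hcont.mul continuousOn_id) hcont]
  refine cfc_congr fun t ht ↦ ?_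
  have hpos := add_pos_of_mem_spectrum hs hδ ht
  calc (√(t + δ))⁻¹ * t * (√(t + δ))⁻¹ = t / (√(t + δ) * √(t + δ)) := by
        rw [div_eq_mul_inv, mul_inv, mul_comm _ t, mul_assoc]
    _ = t / (t + δ) := by rw [Real.mul_self_sqrt hpos.le]

end ApproxSupport

section StrongConvergence

lemma le_of_tendsto_apply {𝕜 E ι : Type*} [RCLike 𝕜] [NormedAddCommGroup E] [InnerProductSpace 𝕜 E]
    {l : Filter ι} [l.NeBot] {f g : ι → E →L[𝕜] E} {x y : E →L[𝕜] E}
    (hf : ∀ v, Tendsto (fun i ↦ f i v) l (𝓝 (x v))) (hg : ∀ v, Tendsto (fun i ↦ g i v) l (𝓝 (y v)))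
    (hle : ∀ᶠ i in l, f i ≤ g i) : x ≤ y := by
  have hlim (v : E) : Tendsto (fun i ↦ (g i - f i) v) l (𝓝 ((y - x) v)) := (hg v).sub (hf v)
  refine ⟨fun u v ↦ ?_, fun v ↦ ?_⟩
  · exact tendsto_nhds_unique_of_eventuallyEq ((hlim u).inner tendsto_const_nhds)
      (tendsto_const_nhds.inner (hlim v)) (hle.mono fun i hi ↦ hi.isSymmetric u v)
  · exact ge_of_tendsto (RCLike.continuous_re.continuousAt.tendsto.comp
      ((hlim v).inner tendsto_const_nhds)) (hle.mono fun i hi ↦ hi.re_inner_nonneg_left v)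

lemma isLUB_range_of_tendsto_apply {𝕜 E ι : Type*} [RCLike 𝕜] [NormedAddCommGroup E]
    [InnerProductSpace 𝕜 E] [Preorder ι] [IsDirectedOrder ι] [Nonempty ι] {f : ι → E →L[𝕜] E}
    {x : E →L[𝕜] E} (hmono : Monotone f) (hf : ∀ v, Tendsto (fun i ↦ f i v) atTop (𝓝 (x v))) :
    IsLUB (Set.range f) x := by
  refine ⟨?_, fun y hy ↦ ?_⟩
  · rintro _ ⟨i, rfl⟩
    exact le_of_tendsto_apply (fun _ ↦ tendsto_const_nhds) hf
      ((eventually_ge_atTop i).mono fun _ hj ↦ hmono hj)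
  · exact le_of_tendsto_apply hf (fun _ ↦ tendsto_const_nhds)
      (.of_forall fun i ↦ hy (Set.mem_range_self i))

variable {H : Type*} [NormedAddCommGroup H] [InnerProductSpace ℂ H] [CompleteSpace H]
  {s : H →L[ℂ] H}

lemma norm_approxSupport_mul_self_sub_le (hs : 0 ≤ s) {δ : ℝ} (hδ : 0 < δ) :
    ‖approxSupport s δ * s - s‖ ≤ δ := by
  rw [approxSupport_mul_self hs hδ, sub_sub_cancel_left, norm_neg, norm_smul,
    Real.norm_of_nonneg hδ.le]
  exact mul_le_of_le_one_right hδ.le (norm_approxSupport_le_one hs hδ)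

lemma approxSupport_apply_eq_zero (hs : 0 ≤ s) {δ : ℝ} (hδ : 0 < δ) {v : H} (hv : s v = 0) :
    approxSupport s δ v = 0 := by
  have h := DFunLike.congr_fun (approxSupport_mul_self hs hδ) v
  simpa [hv, hδ.ne'] using h

lemma tendsto_approxSupport_apply_apply (hs : 0 ≤ s) {δ : ℕ → ℝ} (hδ : ∀ k, 0 < δ k)
    (hlim : Tendsto δ atTop (𝓝 0)) (v : H) :
    Tendsto (fun k ↦ approxSupport s (δ k) (s v)) atTop (𝓝 (s v)) := by
  rw [tendsto_iff_norm_sub_tendsto_zero]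
  refine squeeze_zero (fun _ ↦ norm_nonneg _) (fun k ↦ ?_) (by simpa using hlim.mul_const ‖v‖)
  exact ((approxSupport s (δ k) * s - s).le_opNorm v).trans
    (by gcongr; exact norm_approxSupport_mul_self_sub_le hs (hδ k))

lemma tendsto_approxSupport_apply (hs : 0 ≤ s) {δ : ℕ → ℝ} (hδ : ∀ k, 0 < δ k)
    (hlim : Tendsto δ atTop (𝓝 0)) (v : H) :
    Tendsto (fun k ↦ approxSupport s (δ k) v) atTop (𝓝 (rangeProjection s v)) := by
  have hequi : Equicontinuous fun k ↦ ⇑(approxSupport s (δ k)) :=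
    (LipschitzWith.uniformEquicontinuous _ 1 fun k ↦
      (approxSupport s (δ k)).lipschitz.weaken
        (norm_approxSupport_le_one hs (hδ k))).equicontinuous
  have hrange : rangeProjection s v ∈
      {u | Tendsto (fun k ↦ approxSupport s (δ k) u) atTop (𝓝 u)} :=
    closure_minimal (Set.range_subset_iff.2 (tendsto_approxSupport_apply_apply hs hδ hlim))
      (hequi.isClosed_setOfPred_tendsto continuous_id) (rangeProjection_apply_mem s v)
  have hker : s (v - rangeProjection s v) = 0 := by
    simpa only [(IsSelfAdjoint.of_nonneg hs).star_eq] using apply_sub_rangeProjection_apply s v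
  refine Tendsto.congr (fun k ↦ ?_) hrange
  rw [eq_comm, ← sub_eq_zero, ← map_sub, approxSupport_apply_eq_zero hs (hδ k) hker]

lemma monotone_approxSupport (hs : 0 ≤ s) {δ : ℕ → ℝ} (hδ : ∀ k, 0 < δ k) (hanti : Antitone δ) :
    Monotone fun k ↦ approxSupport s (δ k) :=
  fun _ _ h ↦ approxSupport_le_approxSupport hs (hδ _) (hanti h)

lemma isLUB_approxSupport (hs : 0 ≤ s) {δ : ℕ → ℝ} (hδ : ∀ k, 0 < δ k) (hanti : Antitone δ)
    (hlim : Tendsto δ atTop (𝓝 0)) :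
    IsLUB (Set.range fun k ↦ approxSupport s (δ k)) (rangeProjection s) :=
  isLUB_range_of_tendsto_apply (monotone_approxSupport hs hδ hanti)
    (tendsto_approxSupport_apply hs hδ hlim)

end StrongConvergence

variable {H : Type*} [NormedAddCommGroup H] [InnerProductSpace ℂ H] [CompleteSpace H]
  {M : VonNeumannAlgebra H}

lemma isProjection_iff_isStarProjection {p : H →L[ℂ] H} : IsProjection p ↔ IsStarProjection p :=
  ⟨fun h ↦ ⟨h.1, h.2⟩, fun h ↦ ⟨h.isIdempotentElem, h.isSelfAdjoint⟩⟩

section Membership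

lemma commute_of_mem_commutant {x z : H →L[ℂ] H} (hx : x ∈ M) (hz : z ∈ M.commutant) :
    Commute z x :=
  (VonNeumannAlgebra.mem_commutant_iff.1 hz x hx).symm

lemma mem_of_forall_commute {x : H →L[ℂ] H} (h : ∀ z ∈ M.commutant, Commute z x) : x ∈ M := by
  rw [← M.commutant_commutant]
  exact VonNeumannAlgebra.mem_commutant_iff.2 h

lemma rangeProjection_mem {x : H →L[ℂ] H} (hx : x ∈ M) : rangeProjection x ∈ M :=
  mem_of_forall_commute fun _ hz ↦ commute_rangeProjection (commute_of_mem_commutant hx hz)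
    (commute_of_mem_commutant hx (star_mem hz))

lemma cfc_mem {x : H →L[ℂ] H} (hx : x ∈ M) (f : ℝ → ℝ) : cfc f x ∈ M :=
  mem_of_forall_commute fun _ hz ↦ ((commute_of_mem_commutant hx hz).symm.cfc_real f).symm

end Membership

section Trace

/-- A trace on the positive part of `M` that is normal along increasing sequences. A positive
increasing sequence with a supremum is norm bounded, so the usual bound is implicit. -/
structure IsSequentiallyNormalTrace (M : VonNeumannAlgebra H) (τ : (H →L[ℂ] H) → ENNReal) :
    Prop where
  additive : ∀ x ∈ M, ∀ y ∈ M, 0 ≤ x → 0 ≤ y → τ (x + y) = τ x + τ y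
  tracial : ∀ x ∈ M, τ (star x * x) = τ (x * star x)
  normal : ∀ f : ℕ → H →L[ℂ] H, (∀ k, f k ∈ M) → (∀ k, 0 ≤ f k) → Monotone f →
    ∀ x ∈ M, IsLUB (Set.range f) x → τ x = ⨆ k, τ (f k)

variable {τ : (H →L[ℂ] H) → ENNReal}

lemma IsFNSTrace.isSequentiallyNormalTrace (hτ : IsFNSTrace M τ) :
    IsSequentiallyNormalTrace M τ where
  additive x hx y hy := hτ.additive x y hx hy
  tracial := hτ.tracial
  normal f hf hf₀ hmono x hx hlub := by
    have hbound (k : ℕ) : ‖f k‖ ≤ ‖x‖ :=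
      CStarAlgebra.norm_le_norm_of_nonneg_of_le (hf₀ k) (hlub.1 (Set.mem_range_self k))
    have hrange : Set.range (fun k : ULift ℕ ↦ f k.down) = Set.range f :=
      ULift.down_surjective.range_comp f
    rw [hτ.normal (ULift ℕ) (fun k ↦ f k.down) x (fun k ↦ hf k.down) (fun k ↦ hf₀ k.down)
      (fun _ _ h ↦ hmono h) ⟨‖x‖, fun k ↦ hbound k.down⟩ hx (hrange ▸ hlub)]
    exact ULift.down_surjective.iSup_comp fun k ↦ τ (f k)

namespace IsSequentiallyNormalTrace

lemma mono (hτ : IsSequentiallyNormalTrace M τ) {x y : H →L[ℂ] H} (hx : x ∈ M) (hy : y ∈ M)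
    (hx₀ : 0 ≤ x) (hxy : x ≤ y) : τ x ≤ τ y := by
  rw [← add_sub_cancel x y, hτ.additive x hx _ (sub_mem hy hx) hx₀ (sub_nonneg.2 hxy)]
  exact le_self_add

lemma apply_mul_star_le (hτ : IsSequentiallyNormalTrace M τ) {b q : H →L[ℂ] H} (hb : b ∈ M)
    (hb_norm : ‖b‖ ≤ 1) (hq : q ∈ M) (hq_proj : IsStarProjection q) (hbq : b * q = b) :
    τ (b * star b) ≤ τ q := by
  have hqb : q * star b = star b := by
    simpa only [star_mul, hq_proj.isSelfAdjoint.star_eq] using congrArg star hbq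
  have hone : star b * b ≤ 1 := by
    rw [← CStarAlgebra.norm_le_one_iff_of_nonneg _ (star_mul_self_nonneg b),
      CStarRing.norm_star_mul_self]
    exact mul_le_one₀ hb_norm (norm_nonneg b) hb_norm
  have hle : star b * b ≤ q := by
    calc star b * b = q * (star b * b) * q := by rw [← mul_assoc, hqb, mul_assoc, hbq]
      _ ≤ q * 1 * q := hq_proj.isSelfAdjoint.conjugate_le_conjugate hone
      _ = q := by rw [mul_one, hq_proj.isIdempotentElem.eq]
  rw [← hτ.tracial b hb]
  exact hτ.mono (mul_mem (star_mem hb) hb) hq (star_mul_self_nonneg b) hle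

lemma apply_approxSupport_le (hτ : IsSequentiallyNormalTrace M τ) {x q : H →L[ℂ] H} (hx : x ∈ M)
    (hq : q ∈ M) (hq_proj : IsStarProjection q) (hxq : x * q = x) {δ : ℝ} (hδ : 0 < δ) :
    τ (approxSupport (x * star x) δ) ≤ τ q := by
  have hs : 0 ≤ x * star x := mul_star_self_nonneg x
  set g := cfc (fun t : ℝ ↦ (√(t + δ))⁻¹) (x * star x) with hg
  have hg_mem : g ∈ M := cfc_mem (mul_mem hx (star_mem hx)) _
  have hg_star : star g = g := (cfc_predicate (p := IsSelfAdjoint) _ (x * star x)).star_eq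
  have heq : (g * x) * star (g * x) = approxSupport (x * star x) δ := by
    rw [← approxSupport_eq_conjugate hs hδ, star_mul, hg_star]
    simp only [hg, mul_assoc]
  have hnorm : ‖g * x‖ ≤ 1 := by
    rw [← sq_le_one_iff₀ (norm_nonneg _), sq, ← CStarRing.norm_self_mul_star, heq]
    exact norm_approxSupport_le_one hs hδ
  rw [← heq]
  exact hτ.apply_mul_star_le (mul_mem hg_mem hx) hnorm hq hq_proj (by rw [mul_assoc, hxq])

lemma apply_rangeProjection_le (hτ : IsSequentiallyNormalTrace M τ) {x q : H →L[ℂ] H} (hx : x ∈ M)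
    (hq : q ∈ M) (hq_proj : IsStarProjection q) (hxq : x * q = x) :
    τ (rangeProjection x) ≤ τ q := by
  have hs : 0 ≤ x * star x := mul_star_self_nonneg x
  have hs_mem : x * star x ∈ M := mul_mem hx (star_mem hx)
  have hδ (k : ℕ) : (0 : ℝ) < 1 / (k + 1) := Nat.one_div_pos_of_nat
  have hanti : Antitone fun k : ℕ ↦ (1 : ℝ) / (k + 1) := fun _ _ h ↦ Nat.one_div_le_one_div h
  rw [← rangeProjection_mul_star, hτ.normal _ (fun k ↦ cfc_mem hs_mem _)
    (fun k ↦ approxSupport_nonneg hs (hδ k)) (monotone_approxSupport hs hδ hanti) _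
    (rangeProjection_mem hs_mem)
    (isLUB_approxSupport hs hδ hanti tendsto_one_div_add_atTop_nhds_zero_nat)]
  exact iSup_le fun k ↦ hτ.apply_approxSupport_le hx hq hq_proj hxq (hδ k)

lemma isTauFiniteProjection_commutingHull (hτ : IsSequentiallyNormalTrace M τ)
    {e p : H →L[ℂ] H} (he : e ∈ M) (he_proj : IsStarProjection e)
    (hp : IsTauFiniteProjection M τ p) : IsTauFiniteProjection M τ (commutingHull e p) := by
  obtain ⟨hp_mem, hp_proj, hp_fin⟩ := hp
  have hmem : e * p ∈ M := mul_mem he hp_mem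
  have hmem' : (1 - e) * p ∈ M := mul_mem (sub_mem (one_mem M) he) hp_mem
  have hle {f : H →L[ℂ] H} (hf : f * p ∈ M) : τ (rangeProjection (f * p)) ≤ τ p :=
    hτ.apply_rangeProjection_le hf hp_mem (isProjection_iff_isStarProjection.1 hp_proj)
      (by rw [mul_assoc, hp_proj.1])
  refine ⟨add_mem (rangeProjection_mem hmem) (rangeProjection_mem hmem'),
    isProjection_iff_isStarProjection.2 (isStarProjection_commutingHull he_proj p), ?_⟩
  calc τ (commutingHull e p)
      = τ (rangeProjection (e * p)) + τ (rangeProjection ((1 - e) * p)) :=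
        hτ.additive _ (rangeProjection_mem hmem) _ (rangeProjection_mem hmem')
          (isStarProjection_rangeProjection _).nonneg (isStarProjection_rangeProjection _).nonneg
    _ ≤ τ p + τ p := add_le_add (hle hmem) (hle hmem')
    _ < ⊤ := ENNReal.add_lt_top.2 ⟨hp_fin, hp_fin⟩

lemma exists_isTauFiniteProjection_commute (hτ : IsSequentiallyNormalTrace M τ)
    {F : Set (H →L[ℂ] H)} (hF : F.Finite) (hF_mem : ∀ e ∈ F, e ∈ M)
    (hF_proj : ∀ e ∈ F, IsStarProjection e) (hF_comm : F.Pairwise Commute)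
    {q : H →L[ℂ] H} (hq : IsTauFiniteProjection M τ q) :
    ∃ p, IsTauFiniteProjection M τ p ∧ p * q = q ∧ ∀ e ∈ F, Commute e p := by
  induction F, hF using Set.Finite.induction_on with
  | empty => exact ⟨q, hq, hq.2.1.1, fun _ h ↦ h.elim⟩
  | @insert e F heF _ ih =>
    simp only [Set.forall_mem_insert] at hF_mem hF_proj
    obtain ⟨p, hp, hpq, hpF⟩ := ih hF_mem.2 hF_proj.2 (hF_comm.mono (Set.subset_insert e F))
    refine ⟨commutingHull e p, hτ.isTauFiniteProjection_commutingHull hF_mem.1 hF_proj.1 hp, ?_, ?_⟩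
    · rw [← hpq, ← mul_assoc, commutingHull_mul_self hF_proj.1]
    · rw [Set.forall_mem_insert]
      refine ⟨commute_self_commutingHull hF_proj.1 p, fun f hf ↦ ?_⟩
      have hfe : Commute f e := hF_comm (Set.mem_insert_of_mem e hf) (Set.mem_insert e F)
        (ne_of_mem_of_not_mem hf heF)
      exact commute_commutingHull (hF_proj.2 f hf).isSelfAdjoint hfe (hpF f hf)

end IsSequentiallyNormalTrace

end Trace

section Approximation

lemma norm_mul_sub_mul_le {R : Type*} [NonUnitalSeminormedRing R] {p d : R} (h : Commute p d)
    (a : R) : ‖p * a - a * p‖ ≤ 2 * ‖p‖ * ‖a - d‖ := by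
  have heq : p * a - a * p = p * (a - d) - (a - d) * p := by
    rw [mul_sub, sub_mul, h.eq, sub_sub_sub_cancel_right]
  calc ‖p * a - a * p‖ ≤ ‖p * (a - d)‖ + ‖(a - d) * p‖ := heq ▸ norm_sub_le _ _
    _ ≤ ‖p‖ * ‖a - d‖ + ‖a - d‖ * ‖p‖ := add_le_add (norm_mul_le _ _) (norm_mul_le _ _)
    _ = 2 * ‖p‖ * ‖a - d‖ := by ring

lemma subset_closure_of_forall_exists_norm_sub_le {E : Type*} [SeminormedAddCommGroup E]
    {V G : AddSubgroup E} (hVG : V ≤ G) {c : ℝ} (hc : c < 1)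
    (h : ∀ a ∈ G, ∃ v ∈ V, ‖a - v‖ ≤ c * ‖a‖) : (G : Set E) ⊆ closure V := by
  intro a ha
  have hne : (V : Set E).Nonempty := ⟨0, V.zero_mem⟩
  rw [Metric.mem_closure_iff_infDist_zero hne]
  by_contra hd
  have hpos : 0 < Metric.infDist a V := Metric.infDist_nonneg.lt_of_ne' hd
  have hstep : ∀ v ∈ V, Metric.infDist a V ≤ c * ‖a - v‖ := fun v hv ↦ by
    obtain ⟨w, hw, hle⟩ := h (a - v) (sub_mem ha (hVG hv))
    calc Metric.infDist a V ≤ dist a (v + w) := Metric.infDist_le_dist_of_mem (add_mem hv hw)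
      _ = ‖a - v - w‖ := by rw [dist_eq_norm, sub_sub]
      _ ≤ c * ‖a - v‖ := hle
  have hc₀ : 0 < c :=
    pos_of_mul_pos_left (hpos.trans_le (hstep 0 V.zero_mem)) (norm_nonneg _)
  have hdiv : Metric.infDist a V / c ≤ Metric.infDist a V :=
    (Metric.le_infDist hne).2 fun v hv ↦ by
      rw [dist_eq_norm, div_le_iff₀' hc₀]
      exact hstep v hv
  rw [div_le_iff₀ hc₀] at hdiv
  exact absurd hdiv (not_le.2 (mul_lt_of_lt_one_right hpos hc))

section CStarAlgebra

variable {A : Type*} [CStarAlgebra A] [PartialOrder A] [StarOrderedRing A] {a p : A}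

lemma norm_le_of_neg_le_of_le (ha : IsSelfAdjoint a) {c : ℝ} (hc : 0 ≤ c)
    (hneg : -(c • 1) ≤ a) (hle : a ≤ c • 1) : ‖a‖ ≤ c := by
  rw [← neg_smul, ← Algebra.algebraMap_eq_smul_one, algebraMap_le_iff_le_spectrum ha] at hneg
  rw [← Algebra.algebraMap_eq_smul_one, le_algebraMap_iff_spectrum_le ha] at hle
  rw [← cfc_id ℝ a ha]
  exact norm_cfc_le hc fun t ht ↦ abs_le.2 ⟨hneg t ht, hle t ht⟩

lemma conjugate_le_norm_smul (hp : IsStarProjection p) (ha : IsSelfAdjoint a) :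
    p * a * p ≤ ‖a‖ • p := by
  simpa only [Algebra.algebraMap_eq_smul_one, mul_smul_comm, mul_one, smul_mul_assoc,
    hp.isIdempotentElem.eq] using
    hp.isSelfAdjoint.conjugate_le_conjugate ha.le_algebraMap_norm_self

lemma le_norm_smul_of_mul_posPart (ha : IsSelfAdjoint a) (hp : IsStarProjection p)
    (hpos : p * a⁺ = a⁺) (hneg : p * a⁻ = 0) : a ≤ ‖a‖ • p := by
  have hpos' : a⁺ * p = a⁺ := by
    simpa only [star_mul, hp.isSelfAdjoint.star_eq, (CFC.posPart_nonneg a).isSelfAdjoint.star_eq]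
      using congrArg star hpos
  have hpa : p * a = a⁺ := by
    rw [← CFC.posPart_sub_negPart a ha, mul_sub, hpos, hneg, sub_zero, CFC.posPart_sub_negPart a ha]
  calc a ≤ a⁺ := CFC.le_posPart ha
    _ = p * a * p := by rw [hpa, hpos']
    _ ≤ ‖a‖ • p := conjugate_le_norm_smul hp ha

lemma norm_sub_smul_projection_le (ha : IsSelfAdjoint a) (hp : IsStarProjection p)
    (hpos : p * a⁺ = a⁺) (hneg : p * a⁻ = 0) :
    ‖a - (‖a‖ • p - (‖a‖ / 2) • 1)‖ ≤ ‖a‖ / 2 := by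
  have hle : a ≤ ‖a‖ • p := le_norm_smul_of_mul_posPart ha hp hpos hneg
  have hle' : -a ≤ ‖a‖ • (1 - p) := by
    simpa only [norm_neg] using le_norm_smul_of_mul_posPart ha.neg hp.one_sub
      (by rw [CFC.posPart_neg, sub_mul, one_mul, hneg, sub_zero])
      (by rw [CFC.negPart_neg, sub_mul, one_mul, hpos, sub_self])
  have hhalf : ‖a‖ • (1 : A) = (‖a‖ / 2) • 1 + (‖a‖ / 2) • 1 := by rw [← add_smul, add_halves]
  have hsa : IsSelfAdjoint (a - (‖a‖ • p - (‖a‖ / 2) • 1)) :=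
    ha.sub (((IsSelfAdjoint.all _).smul hp.isSelfAdjoint).sub
      ((IsSelfAdjoint.all _).smul (.one A)))
  refine norm_le_of_neg_le_of_le hsa (by positivity) ?_ ?_
  · rw [smul_sub, hhalf, neg_le_iff_add_nonneg] at hle'
    rw [neg_le_iff_add_nonneg]
    convert hle' using 1
    abel
  · rw [← sub_nonneg] at hle ⊢
    convert hle using 1
    abel

end CStarAlgebra

lemma posPart_mem {a : H →L[ℂ] H} (ha : a ∈ M) : a⁺ ∈ M := by
  rw [CFC.posPart_def, cfcₙ_eq_cfc]
  exact cfc_mem ha _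

lemma exists_isStarProjection_norm_sub_le {a : H →L[ℂ] H} (ha : a ∈ M) (hsa : IsSelfAdjoint a) :
    ∃ p ∈ M, IsStarProjection p ∧ ‖a - (‖a‖ • p - (‖a‖ / 2) • 1)‖ ≤ ‖a‖ / 2 := by
  have hneg := CFC.negPart_nonneg a
  have hker : a⁻ * rangeProjection a⁺ = 0 := by
    rw [mul_rangeProjection_congr (w := 0) (by rw [CFC.negPart_mul_posPart, zero_mul]), zero_mul]
  refine ⟨rangeProjection a⁺, rangeProjection_mem (posPart_mem ha),
    isStarProjection_rangeProjection _, norm_sub_smul_projection_le hsa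
      (isStarProjection_rangeProjection _) (rangeProjection_mul_self _) ?_⟩
  simpa only [star_mul, star_zero, (isStarProjection_rangeProjection _).isSelfAdjoint.star_eq,
    hneg.isSelfAdjoint.star_eq] using congrArg star hker

lemma mem_closure_span_isStarProjection_of_isSelfAdjoint {a : H →L[ℂ] H} (ha : a ∈ M)
    (hsa : IsSelfAdjoint a) :
    a ∈ closure (Submodule.span ℝ {p | p ∈ M ∧ IsStarProjection p} : Set (H →L[ℂ] H)) := by
  set V := Submodule.span ℝ {p | p ∈ M ∧ IsStarProjection p}
  let G : Submodule ℝ (H →L[ℂ] H) := selfAdjoint.submodule ℝ (H →L[ℂ] H) ⊓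
    M.toStarSubalgebra.toSubalgebra.toSubmodule.restrictScalars ℝ
  have hVG : V ≤ G := Submodule.span_le.2 fun p hp ↦ ⟨hp.2.isSelfAdjoint, hp.1⟩
  refine subset_closure_of_forall_exists_norm_sub_le (V := V.toAddSubgroup) (G := G.toAddSubgroup)
    hVG one_half_lt_one (fun b ⟨hb_sa, hb⟩ ↦ ?_) ⟨hsa, ha⟩
  obtain ⟨p, hp, hp_proj, hle⟩ := exists_isStarProjection_norm_sub_le hb hb_sa
  refine ⟨‖b‖ • p - (‖b‖ / 2) • 1, ?_, by linarith⟩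
  exact sub_mem (V.smul_mem _ (Submodule.subset_span ⟨hp, hp_proj⟩))
    (V.smul_mem _ (Submodule.subset_span ⟨one_mem M, .one _⟩))

lemma mem_closure_span_isStarProjection {a : H →L[ℂ] H} (ha : a ∈ M) :
    a ∈ (Submodule.span ℂ {p | p ∈ M ∧ IsStarProjection p}).topologicalClosure := by
  set V := (Submodule.span ℂ {p | p ∈ M ∧ IsStarProjection p}).topologicalClosure
  have hsa {b : H →L[ℂ] H} (hb : b ∈ M) (hb_sa : IsSelfAdjoint b) : b ∈ V :=
    closure_mono (Submodule.span_le_restrictScalars ℝ ℂ _)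
      (mem_closure_span_isStarProjection_of_isSelfAdjoint hb hb_sa)
  have hsmul {b : H →L[ℂ] H} (hb : b ∈ M) (c : ℂ) : c • b ∈ M :=
    M.toStarSubalgebra.smul_mem hb c
  have hre : (realPart a : H →L[ℂ] H) ∈ M := by
    rw [realPart_apply_coe, ← Complex.coe_smul]
    exact hsmul (add_mem ha (star_mem ha)) _
  have him : (imaginaryPart a : H →L[ℂ] H) ∈ M := by
    rw [imaginaryPart_apply_coe, ← Complex.coe_smul]
    exact hsmul (hsmul (sub_mem ha (star_mem ha)) _) _
  rw [← realPart_add_I_smul_imaginaryPart a]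
  exact V.add_mem (hsa hre (realPart a).2) (V.smul_mem _ (hsa him (imaginaryPart a).2))

lemma exists_finite_forall_commute_norm_sub_lt {a : H →L[ℂ] H} (ha : a ∈ M) {ε : ℝ} (hε : 0 < ε) :
    ∃ F : Set (H →L[ℂ] H), F.Finite ∧ (∀ e ∈ F, e ∈ M ∧ IsStarProjection e) ∧
      ∃ d, ‖a - d‖ < ε ∧ ∀ z, (∀ e ∈ F, Commute e z) → Commute d z := by
  obtain ⟨d, hd, hdist⟩ := Metric.mem_closure_iff.1 (mem_closure_span_isStarProjection ha) ε hε
  obtain ⟨T, hT, hdT⟩ := Submodule.mem_span_finite_of_mem_span hd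
  refine ⟨T, T.finite_toSet, hT, d, by rwa [← dist_eq_norm], fun z hz ↦ ?_⟩
  exact Submodule.span_induction hz (Commute.zero_left z) (fun _ _ _ _ ↦ Commute.add_left)
    (fun c _ _ h ↦ h.smul_left c) hdT

end Approximation

section VonNeumannClosure

variable {S : Set (H →L[ℂ] H)}

/-- The von Neumann algebra generated by `S`, encoded as the double commutant of `S ∪ star S`. -/
def vonNeumannClosure (S : Set (H →L[ℂ] H)) : VonNeumannAlgebra H where
  toStarSubalgebra := .centralizer ℂ (StarSubalgebra.centralizer ℂ S : Set (H →L[ℂ] H))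
  centralizer_centralizer' := by
    simp [Set.centralizer_centralizer_centralizer]

lemma coe_vonNeumannClosure (S : Set (H →L[ℂ] H)) :
    (vonNeumannClosure S : Set (H →L[ℂ] H)) = (S ∪ star S).centralizer.centralizer :=
  StarSubalgebra.coe_centralizer_centralizer ℂ S

lemma subset_vonNeumannClosure : S ⊆ vonNeumannClosure S := by
  rw [coe_vonNeumannClosure]
  exact Set.subset_union_left.trans Set.subset_centralizer_centralizer

lemma vonNeumannClosure_le (h : S ⊆ M) : vonNeumannClosure S ≤ M := by
  have hstar : star S ⊆ M := fun x hx ↦ star_mem_iff.1 (h hx)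
  rw [← SetLike.coe_subset_coe, coe_vonNeumannClosure, ← M.centralizer_centralizer]
  exact Set.centralizer_subset (Set.centralizer_subset (Set.union_subset h hstar))

lemma commute_of_mem_vonNeumannClosure (h : ∀ x ∈ S, ∀ y ∈ S, Commute x y)
    (h' : ∀ x ∈ S, ∀ y ∈ S, Commute x (star y)) {x y : H →L[ℂ] H} (hx : x ∈ vonNeumannClosure S)
    (hy : y ∈ vonNeumannClosure S) : Commute x y := by
  rw [← SetLike.mem_coe, coe_vonNeumannClosure] at hx hy
  have hcomm := Set.union_star_self_comm (fun x hx y hy ↦ h y hy x hx) fun x hx y hy ↦ h' y hy x hx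
  exact Set.centralizer_centralizer_comm_of_comm (fun x hx y hy ↦ hcomm y hy x hx) x hx y hy

end VonNeumannClosure

lemma IsSequentiallyNormalTrace.exists_isTauFiniteProjection_norm_commutator_le
    {N : VonNeumannAlgebra H} {τ : (H →L[ℂ] H) → ENNReal} (hτ : IsSequentiallyNormalTrace M τ)
    (hNM : N ≤ M) (hN : ∀ x ∈ N, ∀ y ∈ N, Commute x y) {ι : Type*} [Finite ι]
    {a : ι → H →L[ℂ] H} (ha : ∀ j, a j ∈ N) {q : H →L[ℂ] H} (hq : IsTauFiniteProjection M τ q)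
    {ε : ℝ} (hε : 0 < ε) :
    ∃ p, IsTauFiniteProjection M τ p ∧ p * q = q ∧ ∀ j, ‖p * a j - a j * p‖ ≤ ε := by
  choose F hF_fin hF d hd hF_comm using fun j ↦
    exists_finite_forall_commute_norm_sub_lt (ha j) (half_pos hε)
  have hF' : ∀ e ∈ ⋃ j, F j, e ∈ N ∧ IsStarProjection e := fun e he ↦
    let ⟨j, hj⟩ := Set.mem_iUnion.1 he
    hF j e hj
  obtain ⟨p, hp, hpq, hpF⟩ := hτ.exists_isTauFiniteProjection_commute
    (Set.finite_iUnion hF_fin) (fun e he ↦ hNM (hF' e he).1) (fun e he ↦ (hF' e he).2)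
    (fun e he f hf _ ↦ hN e (hF' e he).1 f (hF' f hf).1) hq
  refine ⟨p, hp, hpq, fun j ↦ ?_⟩
  have hdp : Commute p (d j) :=
    (hF_comm j p fun e he ↦ hpF e (Set.mem_iUnion_of_mem j he)).symm
  calc ‖p * a j - a j * p‖ ≤ 2 * ‖p‖ * ‖a j - d j‖ := norm_mul_sub_mul_le hdp (a j)
    _ ≤ 2 * 1 * (ε / 2) := by
      gcongr
      · exact (isProjection_iff_isStarProjection.1 hp.2.1).norm_le
      · exact (hd j).le
    _ = ε := by ring

end VNA

open VNA in
theorem statement_4_general {H : Type*} [NormedAddCommGroup H] [InnerProductSpace ℂ H]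
    [CompleteSpace H] {M : VonNeumannAlgebra H} {τ : (H →L[ℂ] H) → ENNReal}
    (hτ : IsSequentiallyNormalTrace M τ) {ι : Type*} [Finite ι] {α : ι → H →L[ℂ] H}
    (hα_mem : ∀ j, α j ∈ M) (hα_normal : ∀ j, IsStarNormal (α j))
    (hα_comm : ∀ i j, Commute (α i) (α j)) {q : H →L[ℂ] H} (hq : IsTauFiniteProjection M τ q)
    {ε : ℝ} (hε : 0 < ε) :
    ∃ p, IsTauFiniteProjection M τ p ∧ p * q = q ∧ ∀ j, ‖p * α j - α j * p‖ ≤ ε := by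
  have hcomm : ∀ x ∈ vonNeumannClosure (Set.range α), ∀ y ∈ vonNeumannClosure (Set.range α),
      Commute x y := fun x hx y hy ↦ by
    refine commute_of_mem_vonNeumannClosure ?_ ?_ hx hy
    · rintro _ ⟨i, rfl⟩ _ ⟨j, rfl⟩
      exact hα_comm i j
    · rintro _ ⟨i, rfl⟩ _ ⟨j, rfl⟩
      exact (hα_normal j).commute_star_right (hα_comm i j)
  exact hτ.exists_isTauFiniteProjection_norm_commutator_le
    (vonNeumannClosure_le (Set.range_subset_iff.2 hα_mem)) hcomm
    (fun j ↦ subset_vonNeumannClosure (Set.mem_range_self j)) hq hε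

open VNA in
/-- For every τ-finite projection `q` and `ε > 0` there is a τ-finite
projection `p ≥ q` with `‖[p, α(j)]‖ ≤ ε` for all `j`. -/
theorem statement_4 {H : Type*} [NormedAddCommGroup H] [InnerProductSpace ℂ H]
    [CompleteSpace H] (M : VonNeumannAlgebra H) (τ : (H →L[ℂ] H) → ENNReal)
    (hτ : IsFNSTrace M τ) (n : ℕ) (hn : 0 < n) (α : Fin n → (H →L[ℂ] H))
    (hα : IsCommutingSelfAdjointTuple M α)
    (q : H →L[ℂ] H) (hq : IsTauFiniteProjection M τ q)
    (ε : ℝ) (hε : 0 < ε) :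
    ∃ p, IsTauFiniteProjection M τ p ∧ p * q = q ∧
      ∀ j, ‖p * α j - α j * p‖ ≤ ε :=
  statement_4_general hτ.isSequentiallyNormalTrace hα.1
    (fun j ↦ IsSelfAdjoint.isStarNormal (hα.2.1 j)) hα.2.2 hq hε
end
end
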